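/- (Theorem 11) Let 0 < θ₀ < θ₁ < 1, 0 < q₀, r₀, r₁, r ≤ ∞, a, a₀, b₀, b₁ ∈ SV, and ‖s^{-1/r₀} b₀(s)/a₀(s)‖_{r₀,(1,∞)} < ∞. Put c₀(t) = a₀(t) ‖s^{-1/r₀} b₀(s)/a₀(s)‖_{r₀,(t,∞)} and ρ(t) = t^{θ₁-θ₀} c₀(t)/b₁(t). (i) If 0 < θ < 1 then (Ā^𝓛_{θ₀,r₀,b₀,q₀,a₀}, Ā_{θ₁,r₁;b₁})_{θ,r;a} ≅ Ā_{η,r;a^#}, where η = (1-θ)θ₀ + θθ₁ and a^#(t) = c₀(t)^{1-θ} b₁(t)^θ a(ρ(t)). (ii) If additionally ‖s^{-1/r} a(s)‖_{r,(0,1)} < ∞, then (Ā^𝓛_{θ₀,r₀,b₀,q₀,a₀}, Ā_{θ₁,r₁;b₁})_{1,r;a} ≅ Ā^𝓡_{θ₁,r,a^#,r₁,b₁}, where a^#(t) = b₁(t) a(ρ(t)). -/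

import Mathlib

open MeasureTheory Set ENNReal Filter

noncomputable section

/-- The `L_q` quasi-norm (with respect to Lebesgue measure) of an `ℝ≥0∞`-valued
function over a set of reals; for `q = ∞` it is the essential supremum. -/
def LqNorm (q : ℝ≥0∞) (s : Set ℝ) (g : ℝ → ℝ≥0∞) : ℝ≥0∞ :=
  if q = ∞ then essSup g (volume.restrict s)
  else (∫⁻ t in s, g t ^ q.toReal) ^ q⁻¹.toReal

/-- The weight `s ↦ s ^ (-1/r) * b s`, as an `ℝ≥0∞`-valued function
(`1/∞ = 0` by convention). -/
def svWgt (r : ℝ≥0∞) (b : ℝ → ℝ) : ℝ → ℝ≥0∞ :=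
  fun s => ENNReal.ofReal (s ^ (-(r⁻¹.toReal)) * b s)

/-- `f` and `g` are equivalent on `s`: each is bounded by a constant multiple
of the other there. -/
def EquivOn (s : Set ℝ) (f g : ℝ → ℝ) : Prop :=
  ∃ C : ℝ, 0 < C ∧ ∀ t ∈ s, C⁻¹ * g t ≤ f t ∧ f t ≤ C * g t

/-- A positive measurable function `b` on `(0,∞)` is slowly varying if for every
`ε > 0`, `t ^ ε * b t` is equivalent to a non-decreasing function and
`t ^ (-ε) * b t` is equivalent to a non-increasing function. -/
def SlowlyVarying (b : ℝ → ℝ) : Prop :=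
  AEMeasurable b (volume.restrict (Ioi 0)) ∧ (∀ t ∈ Ioi (0:ℝ), 0 < b t) ∧
    ∀ ε : ℝ, 0 < ε →
      (∃ g : ℝ → ℝ, MonotoneOn g (Ioi 0) ∧ EquivOn (Ioi 0) (fun t => t ^ ε * b t) g) ∧
      (∃ g : ℝ → ℝ, AntitoneOn g (Ioi 0) ∧ EquivOn (Ioi 0) (fun t => t ^ (-ε) * b t) g)

/-- A quasi-Banach space continuously embedded into the ambient (Hausdorff) space `E`,
recorded via its extended-real-valued quasi-norm; the space itself is the set of
vectors of finite quasi-norm. -/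
structure QuasiBanach (E : Type*) [AddCommGroup E] [Module ℝ E] where
  N : E → ℝ≥0∞
  zero : N 0 = 0
  definite : ∀ x, N x = 0 → x = 0
  smul : ∀ (c : ℝ) (x : E), N (c • x) = ENNReal.ofReal |c| * N x
  quasi : ∃ C : ℝ≥0∞, 1 ≤ C ∧ C ≠ ∞ ∧ ∀ x y, N (x + y) ≤ C * (N x + N y)
  complete : ∀ f : ℕ → E,
    (∀ ε : ℝ≥0∞, 0 < ε → ∃ M : ℕ, ∀ m ≥ M, ∀ n ≥ M, N (f m - f n) < ε) →
    (∀ n, N (f n) ≠ ∞) →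
    ∃ g : E, N g ≠ ∞ ∧ Tendsto (fun n => N (f n - g)) atTop (nhds 0)

variable {E : Type*} [AddCommGroup E] [Module ℝ E]

/-- The Peetre K-functional of the couple whose quasi-norms are `N₀`, `N₁`. -/
def Kf (N₀ N₁ : E → ℝ≥0∞) (t : ℝ) (f : E) : ℝ≥0∞ :=
  ⨅ g : E, N₀ g + ENNReal.ofReal t * N₁ (f - g)

/-- The quasi-norm of the real interpolation space `Ā_{θ,q;b}`. -/
def normK (N₀ N₁ : E → ℝ≥0∞) (θ : ℝ) (q : ℝ≥0∞) (b : ℝ → ℝ) (f : E) : ℝ≥0∞ :=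
  LqNorm q (Ioi 0) fun u =>
    ENNReal.ofReal (u ^ (-θ - q⁻¹.toReal) * b u) * Kf N₀ N₁ u f

/-- The quasi-norm of the limiting interpolation space `Ā^𝓛_{σ,r,b,q,a}`. -/
def normL (N₀ N₁ : E → ℝ≥0∞) (σ : ℝ) (r q : ℝ≥0∞) (b a : ℝ → ℝ) (f : E) : ℝ≥0∞ :=
  LqNorm r (Ioi 0) fun t =>
    ENNReal.ofReal (t ^ (-(r⁻¹.toReal)) * (b t / a t)) *
      LqNorm q (Ioo 0 t) fun u =>
        ENNReal.ofReal (u ^ (-σ - q⁻¹.toReal) * a u) * Kf N₀ N₁ u f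

/-- The quasi-norm of the limiting interpolation space `Ā^𝓡_{σ,r,b,q,a}`. -/
def normR (N₀ N₁ : E → ℝ≥0∞) (σ : ℝ) (r q : ℝ≥0∞) (b a : ℝ → ℝ) (f : E) : ℝ≥0∞ :=
  LqNorm r (Ioi 0) fun t =>
    ENNReal.ofReal (t ^ (-(r⁻¹.toReal)) * (b t / a t)) *
      LqNorm q (Ioi t) fun u =>
        ENNReal.ofReal (u ^ (-σ - q⁻¹.toReal) * a u) * Kf N₀ N₁ u f

/-- Two (extended-real-valued) quasi-norms define the same space with
equivalent quasi-norms. -/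
def EquivNorms (nX nY : E → ℝ≥0∞) : Prop :=
  ∃ C : ℝ≥0∞, 0 < C ∧ C ≠ ∞ ∧ ∀ f : E, C⁻¹ * nY f ≤ nX f ∧ nX f ≤ C * nY f

/-
In the variable `x = log₂ t` slow variation becomes the Potter bounds of `RegularlyVarying`, and
every function involved changes by a bounded factor over bounded distances, so all the norms become
`ℓ^q` norms of samples at the integers.

The `𝓛`-norm enters only through two facts (`IsOfClass`): with `c = 2 ^ (-θ₀ x) c₀` it dominates
each `c k * K(2 ^ k, f)`, and it is at most a constant times `B` when these terms are bounded by `B`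
times a geometrically decaying kernel. For `v = 2 ^ (-θ₁ x) b₁` one has `ρ = c / v`, and these facts
give Holmstedt's formula in the form that `K(ρ(2 ^ k), f)` in the new couple is at least
`ρ(2 ^ k) * ‖v j * K(2 ^ j, f)‖_{ℓ^{r₁}(j ≥ k)}`, and at most that up to errors coming from indices
below `k`, which a Schur test absorbs as soon as `θ > 0`. For `θ < 1` Hardy's inequality further
replaces the tail norm by its first term; for `θ = 1` the tail norm is what the `𝓡`-norm measures.
-/

theorem two_rpow_ne_zero (x : ℝ) : (2 : ℝ≥0∞) ^ x ≠ 0 :=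
  (ENNReal.rpow_pos two_pos ofNat_ne_top).ne'

theorem two_rpow_ne_top (x : ℝ) : (2 : ℝ≥0∞) ^ x ≠ ∞ :=
  ENNReal.rpow_ne_top_of_ne_zero two_ne_zero ofNat_ne_top

theorem two_rpow_add (x y : ℝ) : (2 : ℝ≥0∞) ^ (x + y) = 2 ^ x * 2 ^ y :=
  ENNReal.rpow_add x y two_ne_zero ofNat_ne_top

theorem two_rpow_le_two_rpow {x y : ℝ} (h : x ≤ y) : (2 : ℝ≥0∞) ^ x ≤ 2 ^ y :=
  ENNReal.rpow_le_rpow_of_exponent_le one_le_two h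

theorem ofReal_two_rpow (x : ℝ) : ENNReal.ofReal (2 ^ x) = 2 ^ x := by
  rw [← ENNReal.ofReal_rpow_of_pos two_pos, ENNReal.ofReal_ofNat]

theorem exists_le_two_rpow {C : ℝ≥0∞} (hC : C ≠ ∞) : ∃ D : ℝ, C ≤ 2 ^ D := by
  obtain ⟨n, hn⟩ := ENNReal.exists_nat_gt hC
  refine ⟨n, hn.le.trans ?_⟩
  rw [ENNReal.rpow_natCast]
  exact_mod_cast n.lt_two_pow_self.le

/-- The kernel `2 ^ (-δ |x|)` governing all off-diagonal estimates. -/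
def decay (δ x : ℝ) : ℝ≥0∞ := 2 ^ (-(δ * |x|))

theorem decay_ne_zero (δ x : ℝ) : decay δ x ≠ 0 := two_rpow_ne_zero _

theorem decay_ne_top (δ x : ℝ) : decay δ x ≠ ∞ := two_rpow_ne_top _

theorem decay_zero (δ : ℝ) : decay δ 0 = 1 := by simp [decay]

theorem decay_le_one {δ : ℝ} (hδ : 0 ≤ δ) (x : ℝ) : decay δ x ≤ 1 := by
  rw [← decay_zero δ, decay, decay, abs_zero]
  exact two_rpow_le_two_rpow (by nlinarith [abs_nonneg x])

theorem decay_sub_comm (δ x y : ℝ) : decay δ (x - y) = decay δ (y - x) := by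
  rw [decay, decay, abs_sub_comm]

/-- `X ≲ Y`: the inequality `X ≤ C * Y` with a finite constant independent of the argument. -/
def Dominated {ι : Type*} (X Y : ι → ℝ≥0∞) : Prop := ∃ C ≠ ∞, ∀ i, X i ≤ C * Y i

local infix:50 "≲" => Dominated

/-- `X ≋ Y`: each of `X` and `Y` is at most a constant times the other. -/
def Comparable {ι : Type*} (X Y : ι → ℝ≥0∞) : Prop := X ≲ Y ∧ Y ≲ X

local infix:50 "≋" => Comparable

section Domination

variable {ι κ : Type*} {X X' Y Y' Z : ι → ℝ≥0∞}

namespace Dominated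

theorem of_le (h : ∀ i, X i ≤ Y i) : X ≲ Y := ⟨1, one_ne_top, fun i => by simpa using h i⟩

theorem const_mul {C : ℝ≥0∞} (hC : C ≠ ∞) : (fun i => C * X i) ≲ X := ⟨C, hC, fun _ => le_rfl⟩

theorem trans : X ≲ Y → Y ≲ Z → X ≲ Z := by
  rintro ⟨C, hC, h⟩ ⟨D, hD, h'⟩
  refine ⟨C * D, ENNReal.mul_ne_top hC hD, fun i => (h i).trans ?_⟩
  grw [h' i, mul_assoc]

instance : @Trans (ι → ℝ≥0∞) (ι → ℝ≥0∞) (ι → ℝ≥0∞) Dominated Dominated Dominated := ⟨trans⟩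

theorem mul : X ≲ Y → X' ≲ Y' → (fun i => X i * X' i) ≲ fun i => Y i * Y' i := by
  rintro ⟨C, hC, h⟩ ⟨D, hD, h'⟩
  refine ⟨C * D, ENNReal.mul_ne_top hC hD, fun i => ?_⟩
  beta_reduce
  grw [h i, h' i, mul_mul_mul_comm]

theorem mul_left (W : ι → ℝ≥0∞) (h : X ≲ Y) : (fun i => W i * X i) ≲ fun i => W i * Y i :=
  (of_le fun _ => le_rfl).mul h

theorem comp (h : X ≲ Y) (φ : κ → ι) : (fun k => X (φ k)) ≲ fun k => Y (φ k) :=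
  let ⟨C, hC, h⟩ := h
  ⟨C, hC, fun k => h (φ k)⟩

end Dominated

namespace Comparable

theorem symm (h : X ≋ Y) : Y ≋ X := ⟨h.2, h.1⟩

theorem trans (h : X ≋ Y) (h' : Y ≋ Z) : X ≋ Z := ⟨h.1.trans h'.1, h'.2.trans h.2⟩

instance : @Trans (ι → ℝ≥0∞) (ι → ℝ≥0∞) (ι → ℝ≥0∞) Comparable Comparable Comparable := ⟨trans⟩

theorem mul_left (W : ι → ℝ≥0∞) (h : X ≋ Y) : (fun i => W i * X i) ≋ fun i => W i * Y i :=
  ⟨h.1.mul_left W, h.2.mul_left W⟩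

theorem comp (h : X ≋ Y) (φ : κ → ι) : (fun k => X (φ k)) ≋ fun k => Y (φ k) :=
  ⟨h.1.comp φ, h.2.comp φ⟩

theorem const_mul {C : ℝ≥0∞} (hC₀ : C ≠ 0) (hC : C ≠ ∞) : (fun i => C * X i) ≋ X :=
  ⟨.const_mul hC, C⁻¹, ENNReal.inv_ne_top.2 hC₀, fun i => by
    rw [← mul_assoc, ENNReal.inv_mul_cancel hC₀ hC, one_mul]⟩

theorem equivNorms (h : X ≋ Y) : EquivNorms X Y := by
  obtain ⟨⟨C, hC, h⟩, D, hD, h'⟩ := h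
  refine ⟨C + D + 1, by simp, by simp [hC, hD], fun f => ⟨?_, ?_⟩⟩
  · rw [ENNReal.inv_mul_le_iff (by simp) (by simp [hC, hD])]
    grw [h' f]
    gcongr
    exact (le_add_left le_rfl).trans le_self_add
  · grw [h f]
    gcongr
    exact le_self_add.trans le_self_add

end Comparable

end Domination

/-- The `ℓ^q` quasi-norm of a two-sided sequence. -/
def seqNorm (q : ℝ≥0∞) (x : ℤ → ℝ≥0∞) : ℝ≥0∞ := eLpNorm x q Measure.count

theorem eLpNorm_le_const_mul {α : Type*} [MeasurableSpace α] {μ : Measure α} (q : ℝ≥0∞)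
    {g h : α → ℝ≥0∞} {C : ℝ≥0∞} (hC : C ≠ ∞) (hgh : ∀ᵐ x ∂μ, g x ≤ C * h x) :
    eLpNorm g q μ ≤ C * eLpNorm h q μ := by
  lift C to NNReal using hC
  exact eLpNorm_le_nnreal_smul_eLpNorm_of_ae_le_mul' hgh q

section SeqNorm

variable {q : ℝ≥0∞} {x y g : ℤ → ℝ≥0∞}

theorem seqNorm_mono (h : ∀ k, x k ≤ y k) : seqNorm q x ≤ seqNorm q y := eLpNorm_mono_enorm h

theorem seqNorm_le_const_mul {C : ℝ≥0∞} (hC : C ≠ ∞) (h : ∀ k, x k ≤ C * y k) :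
    seqNorm q x ≤ C * seqNorm q y := eLpNorm_le_const_mul q hC (.of_forall h)

theorem seqNorm_add_le : seqNorm q (x + y) ≤ LpAddConst q * (seqNorm q x + seqNorm q y) :=
  eLpNorm_add_le' .of_discrete .of_discrete q

theorem seqNorm_top : seqNorm ∞ x = ⨆ k, x k := by simp [seqNorm]

theorem seqNorm_rpow (hq : q ≠ 0) (hq' : q ≠ ∞) :
    seqNorm q x ^ q.toReal = ∑' k, x k ^ q.toReal := by
  rw [seqNorm, eLpNorm_eq_lintegral_rpow_enorm_toReal hq hq', lintegral_count, one_div,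
    ENNReal.rpow_inv_rpow (ENNReal.toReal_pos hq hq').ne']
  rfl

theorem le_seqNorm (hq : q ≠ 0) (x : ℤ → ℝ≥0∞) (k : ℤ) : x k ≤ seqNorm q x := by
  obtain rfl | hq' := eq_or_ne q ∞
  · exact seqNorm_top ▸ le_iSup x k
  · rw [← ENNReal.rpow_le_rpow_iff (ENNReal.toReal_pos hq hq'), seqNorm_rpow hq hq']
    exact ENNReal.le_tsum k

theorem seqNorm_const_mul (hq : q ≠ 0) (c : ℝ≥0∞) (x : ℤ → ℝ≥0∞) :
    seqNorm q (fun k => c * x k) = c * seqNorm q x := by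
  obtain rfl | hq' := eq_or_ne q ∞
  · simp only [seqNorm_top, ENNReal.mul_iSup]
  · have hq₀ := ENNReal.toReal_pos hq hq'
    rw [← (ENNReal.strictMono_rpow_of_pos hq₀).injective.eq_iff]
    simp only [ENNReal.mul_rpow_of_nonneg _ _ hq₀.le, seqNorm_rpow hq hq', ENNReal.tsum_mul_left]

theorem seqNorm_comp_sub_right (k : ℤ) (x : ℤ → ℝ≥0∞) :
    seqNorm q (fun j => x (j - k)) = seqNorm q x :=
  eLpNorm_comp_measurePreserving .of_discrete (measurePreserving_sub_right Measure.count k)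

-- Young's inequality; the supremum in place of a sum makes it hold for `q < 1` and `q > 1` alike.
theorem seqNorm_le_of_le_iSup (hq : q ≠ 0) (φ : ℤ → ℤ)
    (h : ∀ k, x k ≤ ⨆ j, g (k - φ j) * y j) : seqNorm q x ≤ seqNorm q g * seqNorm q y := by
  obtain rfl | hq' := eq_or_ne q ∞
  · simp only [seqNorm_top]
    refine iSup_le fun k => (h k).trans (iSup_le fun j => ?_)
    exact mul_le_mul' (le_iSup g _) (le_iSup y _)
  have hq₀ := ENNReal.toReal_pos hq hq'
  rw [← ENNReal.rpow_le_rpow_iff hq₀, ENNReal.mul_rpow_of_nonneg _ _ hq₀.le]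
  simp only [seqNorm_rpow hq hq']
  calc ∑' k, x k ^ q.toReal
      ≤ ∑' k, ∑' j, (g (k - φ j) * y j) ^ q.toReal := by
        refine ENNReal.tsum_le_tsum fun k => ?_
        grw [h k]
        refine ((ENNReal.orderIsoRpow _ hq₀).map_iSup _).trans_le ?_
        exact iSup_le fun j => ENNReal.le_tsum (f := fun j => (g (k - φ j) * y j) ^ q.toReal) j
    _ = ∑' j, (∑' k, g (k - φ j) ^ q.toReal) * y j ^ q.toReal := by
        simp only [ENNReal.mul_rpow_of_nonneg _ _ hq₀.le]
        rw [ENNReal.tsum_comm]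
        simp only [ENNReal.tsum_mul_right]
    _ = (∑' k, g k ^ q.toReal) * ∑' j, y j ^ q.toReal := by
        rw [← ENNReal.tsum_mul_left]
        congr! 3 with j
        exact (Equiv.subRight (φ j)).tsum_eq fun k => g k ^ q.toReal

theorem tsum_decay_ne_top {δ : ℝ} (hδ : 0 < δ) : ∑' k : ℤ, decay δ k ≠ ∞ := by
  have geometric (n : ℕ) : (2 : ℝ≥0∞) ^ (-(δ * n)) = (2 ^ (-δ)) ^ n := by
    rw [← ENNReal.rpow_mul_natCast, neg_mul]
  have hsum : ∑' n : ℕ, (2 : ℝ≥0∞) ^ (-(δ * n)) ≠ ∞ := by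
    simp only [geometric]
    rw [ENNReal.tsum_geometric, ENNReal.inv_ne_top]
    refine (tsub_pos_of_lt ?_).ne'
    exact ENNReal.rpow_lt_one_of_one_lt_of_neg one_lt_two (neg_neg_of_pos hδ)
  rw [tsum_of_nat_of_neg_add_one ENNReal.summable ENNReal.summable]
  refine ENNReal.add_ne_top.2 ⟨by simpa [decay] using hsum, ne_top_of_le_ne_top hsum ?_⟩
  refine ENNReal.tsum_le_tsum fun n => two_rpow_le_two_rpow ?_
  push_cast
  rw [abs_neg, abs_of_nonneg (by positivity)]
  gcongr
  linarith

theorem seqNorm_decay_ne_top (hq : q ≠ 0) {δ : ℝ} (hδ : 0 < δ) :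
    seqNorm q (fun k => decay δ k) ≠ ∞ := by
  obtain rfl | hq' := eq_or_ne q ∞
  · refine ne_top_of_le_ne_top one_ne_top (seqNorm_top.trans_le (iSup_le fun k => ?_))
    exact decay_le_one hδ.le _
  · have hq₀ := ENNReal.toReal_pos hq hq'
    refine fun h => tsum_decay_ne_top (mul_pos hδ hq₀) ?_
    have := seqNorm_rpow (x := fun k => decay δ k) hq hq'
    rw [h, ENNReal.top_rpow_of_pos hq₀] at this
    rw [this]
    simp only [decay, ← ENNReal.rpow_mul]
    congr! 3
    ring

theorem seqNorm_decay_sub (δ : ℝ) (k : ℤ) :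
    seqNorm q (fun j => decay δ (j - k)) = seqNorm q fun j => decay δ j := by
  rw [← seqNorm_comp_sub_right k fun j => decay δ j]
  push_cast
  rfl

end SeqNorm

section Families

variable {ι : Type*} {q : ℝ≥0∞} {x y : ι → ℤ → ℝ≥0∞}

theorem Dominated.eLpNorm_mono {α : Type*} [MeasurableSpace α] {μ : Measure α}
    {g h : ι → α → ℝ≥0∞} (hgh : (fun p : ι × α => g p.1 p.2) ≲ fun p => h p.1 p.2) :
    (fun i => eLpNorm (g i) q μ) ≲ fun i => eLpNorm (h i) q μ :=
  let ⟨C, hC, hgh⟩ := hgh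
  ⟨C, hC, fun i => eLpNorm_le_const_mul q hC (.of_forall fun x => hgh (i, x))⟩

theorem Comparable.eLpNorm_congr {α : Type*} [MeasurableSpace α] {μ : Measure α}
    {g h : ι → α → ℝ≥0∞} (hgh : (fun p : ι × α => g p.1 p.2) ≋ fun p => h p.1 p.2) :
    (fun i => eLpNorm (g i) q μ) ≋ fun i => eLpNorm (h i) q μ :=
  ⟨hgh.1.eLpNorm_mono, hgh.2.eLpNorm_mono⟩

theorem Dominated.seqNorm_mono (h : (fun p : ι × ℤ => x p.1 p.2) ≲ fun p => y p.1 p.2) :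
    (fun i => seqNorm q (x i)) ≲ fun i => seqNorm q (y i) := h.eLpNorm_mono

theorem Comparable.seqNorm_congr (h : (fun p : ι × ℤ => x p.1 p.2) ≋ fun p => y p.1 p.2) :
    (fun i => seqNorm q (x i)) ≋ fun i => seqNorm q (y i) := h.eLpNorm_congr

theorem seqNorm_dominated_of_decay (hq : q ≠ 0) {δ : ℝ} (hδ : 0 < δ) (φ : ℤ → ℤ)
    (h : (fun p : ι × ℤ => x p.1 p.2) ≲ fun p => ⨆ j, decay δ (p.2 - φ j) * y p.1 j) :
    (fun i => seqNorm q (x i)) ≲ fun i => seqNorm q (y i) := by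
  obtain ⟨C, hC, h⟩ := h
  refine ⟨seqNorm q (fun k => decay δ k) * C,
    ENNReal.mul_ne_top (seqNorm_decay_ne_top hq hδ) hC, fun i => ?_⟩
  have hx (k : ℤ) : x i k ≤ ⨆ j, decay δ ((k - φ j : ℤ) : ℝ) * (C * y i j) := by
    refine (h (i, k)).trans_eq ?_
    push_cast
    simp only [ENNReal.mul_iSup, mul_left_comm]
  rw [mul_assoc, ← seqNorm_const_mul hq C (y i)]
  exact seqNorm_le_of_le_iSup (g := fun k => decay δ k) hq φ hx

theorem seqNorm_dominated_of_near (hq : q ≠ 0) (φ : ℤ → ℤ) (M : ℝ)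
    (h : ∃ C ≠ ∞, ∀ i (k : ℤ), ∃ j, |(k : ℝ) - φ j| ≤ M ∧ x i k ≤ C * y i j) :
    (fun i => seqNorm q (x i)) ≲ fun i => seqNorm q (y i) := by
  obtain ⟨C, hC, h⟩ := h
  refine seqNorm_dominated_of_decay hq one_pos φ
    ⟨C * 2 ^ M, ENNReal.mul_ne_top hC (two_rpow_ne_top M), fun ⟨i, k⟩ => ?_⟩
  obtain ⟨j, hj, hx⟩ := h i k
  have hdecay : 1 ≤ 2 ^ M * decay 1 (k - φ j) := by
    rw [decay, ← two_rpow_add, ← ENNReal.rpow_zero (x := 2)]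
    exact two_rpow_le_two_rpow (by linarith)
  calc x i k ≤ C * (1 * y i j) := by rwa [one_mul]
    _ ≤ C * (2 ^ M * decay 1 (k - φ j) * y i j) := by gcongr
    _ = C * 2 ^ M * (decay 1 (k - φ j) * y i j) := by ring
    _ ≤ _ := by gcongr; exact le_iSup (fun j => decay 1 (k - φ j) * y i j) j

end Families

/-- The `ℓ^q` quasi-norm of a sequence over the indices `j ≥ k`. -/
def tailSum (q : ℝ≥0∞) (x : ℤ → ℝ≥0∞) (k : ℤ) : ℝ≥0∞ := seqNorm q ((Ici k).indicator x)

/-- The `ℓ^q` quasi-norm of a sequence over the indices `j ≤ k`. -/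
def headSum (q : ℝ≥0∞) (x : ℤ → ℝ≥0∞) (k : ℤ) : ℝ≥0∞ := seqNorm q ((Iic k).indicator x)

theorem LqNorm_eq_eLpNorm {q : ℝ≥0∞} (hq : q ≠ 0) (s : Set ℝ) (g : ℝ → ℝ≥0∞) :
    LqNorm q s g = eLpNorm g q (volume.restrict s) := by
  obtain rfl | hq' := eq_or_ne q ∞
  · simp [LqNorm, eLpNormEssSup]
  · rw [LqNorm, if_neg hq', eLpNorm_eq_lintegral_rpow_enorm_toReal hq hq', one_div,
      ENNReal.toReal_inv]
    rfl

theorem measurableEmbedding_two_rpow : MeasurableEmbedding fun x : ℝ => (2 : ℝ) ^ x := by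
  refine Continuous.measurableEmbedding ?_
    (Real.strictMono_rpow_of_base_gt_one one_lt_two).injective
  exact continuous_const.rpow continuous_id fun _ => .inl two_ne_zero

theorem map_two_rpow_withDensity {s : Set ℝ} (hs : MeasurableSet s) :
    Measure.map (fun x : ℝ => (2 : ℝ) ^ x)
        ((volume.restrict s).withDensity fun x => ENNReal.ofReal (Real.log 2) * 2 ^ x) =
      volume.restrict ((fun x : ℝ => (2 : ℝ) ^ x) '' s) := by
  rw [← map_withDensity_abs_det_fderiv_eq_addHaar volume hs.nullMeasurableSet
    (fun x _ =>
      (Real.hasStrictDerivAt_const_rpow two_pos x).hasDerivAt.hasFDerivAt.hasFDerivWithinAt)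
    measurableEmbedding_two_rpow.injective.injOn]
  congr 3 with x
  rw [ContinuousLinearMap.det_toSpanSingleton, abs_of_nonneg (by positivity),
    ENNReal.ofReal_mul (by positivity), ofReal_two_rpow, mul_comm]

/-- The constant `(log 2) ^ (1 / q)` produced by the substitution `u = 2 ^ x` in the `L^q`
quasi-norm. -/
def substConst (q : ℝ≥0∞) : ℝ≥0∞ := ENNReal.ofReal (Real.log 2) ^ q⁻¹.toReal

theorem substConst_ne_zero (q : ℝ≥0∞) : substConst q ≠ 0 :=
  (ENNReal.rpow_pos (by simpa using Real.log_pos one_lt_two) ofReal_ne_top).ne'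

theorem substConst_ne_top (q : ℝ≥0∞) : substConst q ≠ ∞ :=
  ENNReal.rpow_ne_top_of_nonneg toReal_nonneg ofReal_ne_top

theorem LqNorm_image_two_rpow {q : ℝ≥0∞} (hq : q ≠ 0) {s : Set ℝ} (hs : MeasurableSet s)
    (g : ℝ → ℝ≥0∞) :
    LqNorm q ((fun x : ℝ => (2 : ℝ) ^ x) '' s)
        (fun u => ENNReal.ofReal (u ^ (-q⁻¹.toReal)) * g u) =
      substConst q * eLpNorm (fun x => g (2 ^ x)) q (volume.restrict s) := by
  have hlog : ENNReal.ofReal (Real.log 2) ≠ 0 := by simpa using Real.log_pos one_lt_two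
  rw [substConst, LqNorm_eq_eLpNorm hq, ← map_two_rpow_withDensity hs,
    measurableEmbedding_two_rpow.eLpNorm_map_measure]
  obtain rfl | hq' := eq_or_ne q ∞
  · simp only [Function.comp_def, inv_top, toReal_zero, neg_zero, Real.rpow_zero, ofReal_one,
      one_mul, ENNReal.rpow_zero, eLpNorm_exponent_top]
    refine le_antisymm (eLpNormEssSup_mono_measure _ (withDensity_absolutelyContinuous _ _))
      (eLpNormEssSup_mono_measure _ (withDensity_absolutelyContinuous' ?_ ?_))
    · fun_prop
    · exact .of_forall fun x => mul_ne_zero hlog (two_rpow_ne_zero x)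
  · have hq₀ := ENNReal.toReal_pos hq hq'
    rw [eLpNorm_eq_lintegral_rpow_enorm_toReal hq hq',
      eLpNorm_eq_lintegral_rpow_enorm_toReal hq hq',
      lintegral_withDensity_eq_lintegral_mul_non_measurable _ (by fun_prop)
        (.of_forall fun x => ENNReal.mul_lt_top ofReal_lt_top (two_rpow_ne_top x).lt_top),
      ENNReal.toReal_inv, one_div, ← ENNReal.mul_rpow_of_nonneg _ _ (inv_nonneg.2 hq₀.le),
      ← lintegral_const_mul' _ _ ofReal_ne_top]
    congr 1
    refine lintegral_congr fun x => ?_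
    have hx : (2 : ℝ≥0∞) ^ x * ((2 ^ x) ^ (-q.toReal⁻¹)) ^ q.toReal = 1 := by
      rw [← ENNReal.rpow_mul, ← ENNReal.rpow_mul, ← two_rpow_add]
      field_simp
      simp
    simp only [enorm_eq_self, Pi.mul_apply, Function.comp_apply]
    rw [ENNReal.mul_rpow_of_nonneg _ _ hq₀.le, ← ENNReal.ofReal_rpow_of_pos (by positivity),
      ofReal_two_rpow, ← mul_assoc, mul_assoc _ (2 ^ x), hx, mul_one]

theorem image_two_rpow_Ioi (x : ℝ) : (fun x : ℝ => (2 : ℝ) ^ x) '' Ioi x = Ioi (2 ^ x) := by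
  ext u
  refine ⟨?_, fun hu => ⟨Real.logb 2 u, ?_, ?_⟩⟩
  · rintro ⟨y, hy, rfl⟩
    exact Real.rpow_lt_rpow_of_exponent_lt one_lt_two hy
  all_goals have hu₀ : 0 < u := (Real.rpow_pos_of_pos two_pos x).trans hu
  · exact (Real.lt_logb_iff_rpow_lt one_lt_two hu₀).2 hu
  · exact Real.rpow_logb two_pos (by norm_num) hu₀

theorem image_two_rpow_Iio (x : ℝ) : (fun x : ℝ => (2 : ℝ) ^ x) '' Iio x = Ioo 0 (2 ^ x) := by
  ext u
  refine ⟨?_, fun hu => ⟨Real.logb 2 u, ?_, Real.rpow_logb two_pos (by norm_num) hu.1⟩⟩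
  · rintro ⟨y, hy, rfl⟩
    exact ⟨by positivity, Real.rpow_lt_rpow_of_exponent_lt one_lt_two hy⟩
  · exact (Real.logb_lt_iff_lt_rpow one_lt_two hu.1).2 hu.2

theorem image_two_rpow_univ : (fun x : ℝ => (2 : ℝ) ^ x) '' univ = Ioi 0 := by
  ext u
  refine ⟨?_, fun hu => ⟨Real.logb 2 u, mem_univ _, Real.rpow_logb two_pos (by norm_num) hu⟩⟩
  rintro ⟨y, -, rfl⟩
  exact Real.rpow_pos_of_pos two_pos y

/-- The `L^q` quasi-norm of `g` over `(x, ∞)`. -/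
def tailNorm (q : ℝ≥0∞) (g : ℝ → ℝ≥0∞) (x : ℝ) : ℝ≥0∞ := eLpNorm g q (volume.restrict (Ioi x))

/-- The `L^q` quasi-norm of `g` over `(-∞, x)`. -/
def headNorm (q : ℝ≥0∞) (g : ℝ → ℝ≥0∞) (x : ℝ) : ℝ≥0∞ := eLpNorm g q (volume.restrict (Iio x))

theorem eLpNorm_restrict_translate (q : ℝ≥0∞) (g : ℝ → ℝ≥0∞) (s : Set ℝ) (x : ℝ) :
    eLpNorm g q (volume.restrict s) =
      eLpNorm (fun z => g (z + x)) q (volume.restrict ((· + x) ⁻¹' s)) := by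
  have hx := measurableEmbedding_addRight x
  rw [← (measurePreserving_add_right volume x).map_eq, hx.restrict_map, hx.eLpNorm_map_measure]
  rw [(measurePreserving_add_right volume x).map_eq]
  rfl

section Translate

variable {q : ℝ≥0∞} {g : ℝ → ℝ≥0∞} {x y : ℝ} {A : ℝ≥0∞}

theorem tailNorm_le_of_translate (hA : A ≠ ∞) (h : ∀ z, g (z + x) ≤ A * g (z + y)) :
    tailNorm q g x ≤ A * tailNorm q g y := by
  rw [tailNorm, tailNorm, eLpNorm_restrict_translate q g _ x, eLpNorm_restrict_translate q g _ y]
  simpa using eLpNorm_le_const_mul q hA (.of_forall h)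

theorem headNorm_le_of_translate (hA : A ≠ ∞) (h : ∀ z, g (z + x) ≤ A * g (z + y)) :
    headNorm q g x ≤ A * headNorm q g y := by
  rw [headNorm, headNorm, eLpNorm_restrict_translate q g _ x, eLpNorm_restrict_translate q g _ y]
  simpa using eLpNorm_le_const_mul q hA (.of_forall h)

end Translate

/-- A family of functions each of which changes at most by a constant factor over bounded
distances, the constant being uniform in the family. -/
def ModeratelyVarying {ι : Type*} (g : ι → ℝ → ℝ≥0∞) : Prop :=
  ∀ M : ℝ, ∃ C ≠ ∞, ∀ i x y, |x - y| ≤ M → g i x ≤ C * g i y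

namespace ModeratelyVarying

variable {ι : Type*} {g h : ι → ℝ → ℝ≥0∞}

theorem mul (hg : ModeratelyVarying g) (hh : ModeratelyVarying h) :
    ModeratelyVarying fun i x => g i x * h i x := by
  intro M
  obtain ⟨C, hC, hg⟩ := hg M
  obtain ⟨D, hD, hh⟩ := hh M
  refine ⟨C * D, ENNReal.mul_ne_top hC hD, fun i x y hxy => ?_⟩
  beta_reduce
  grw [hg i x y hxy, hh i x y hxy, mul_mul_mul_comm]

theorem const_mul (hg : ModeratelyVarying g) (c : ℝ≥0∞) :
    ModeratelyVarying fun i x => c * g i x := by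
  intro M
  obtain ⟨C, hC, hg⟩ := hg M
  refine ⟨C, hC, fun i x y hxy => ?_⟩
  beta_reduce
  grw [hg i x y hxy, mul_left_comm]

theorem tail (hg : ModeratelyVarying g) (q : ℝ≥0∞) :
    ModeratelyVarying fun i => tailNorm q (g i) := by
  intro M
  obtain ⟨C, hC, hg⟩ := hg M
  exact ⟨C, hC, fun i x y hxy => tailNorm_le_of_translate hC fun z => hg i _ _ (by simpa)⟩

theorem head (hg : ModeratelyVarying g) (q : ℝ≥0∞) :
    ModeratelyVarying fun i => headNorm q (g i) := by
  intro M
  obtain ⟨C, hC, hg⟩ := hg M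
  exact ⟨C, hC, fun i x y hxy => headNorm_le_of_translate hC fun z => hg i _ _ (by simpa)⟩

theorem comparable_near {κ : Type*} (hg : ModeratelyVarying g) {x y : κ → ℝ} {M : ℝ}
    (hxy : ∀ k, |x k - y k| ≤ M) (φ : κ → ι) :
    (fun k => g (φ k) (x k)) ≋ fun k => g (φ k) (y k) :=
  let ⟨C, hC, hg⟩ := hg M
  ⟨⟨C, hC, fun k => hg _ _ _ (hxy k)⟩, C, hC, fun k => hg _ _ _ (abs_sub_comm (x k) _ ▸ hxy k)⟩

end ModeratelyVarying

theorem map_floor_volume : Measure.map (Int.floor : ℝ → ℤ) volume = Measure.count := by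
  refine Measure.ext_of_singleton fun n => ?_
  rw [Measure.map_apply Int.measurable_floor (measurableSet_singleton n),
    Int.preimage_floor_singleton, Real.volume_Ico, Measure.count_singleton]
  simp

theorem eLpNorm_comp_floor (q : ℝ≥0∞) (x : ℤ → ℝ≥0∞) (S : Set ℤ) :
    eLpNorm (fun t : ℝ => x ⌊t⌋) q (volume.restrict (Int.floor ⁻¹' S)) =
      seqNorm q (S.indicator x) := by
  rw [seqNorm, eLpNorm_indicator_eq_eLpNorm_restrict (.of_discrete), ← map_floor_volume,
    Measure.restrict_map Int.measurable_floor .of_discrete,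
    eLpNorm_map_measure .of_discrete Int.measurable_floor.aemeasurable]
  rfl

namespace ModeratelyVarying

variable {ι : Type*} {g : ι → ℝ → ℝ≥0∞}

theorem eLpNorm_sampling (hg : ModeratelyVarying g) (q : ℝ≥0∞) :
    (fun p : ι × Set ℤ => eLpNorm (g p.1) q (volume.restrict (Int.floor ⁻¹' p.2))) ≋
      fun p => seqNorm q (p.2.indicator fun k => g p.1 k) := by
  obtain ⟨⟨C, hC, h⟩, D, hD, h'⟩ := hg.comparable_near
    (x := fun p : ι × ℝ => p.2) (y := fun p => ⌊p.2⌋) (M := 1)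
    (fun p => by rw [Int.self_sub_floor, Int.abs_fract]; exact (Int.fract_lt_one _).le) Prod.fst
  simp only [← eLpNorm_comp_floor]
  exact ⟨⟨C, hC, fun p => eLpNorm_le_const_mul q hC (.of_forall fun t => h (p.1, t))⟩,
    D, hD, fun p => eLpNorm_le_const_mul q hD (.of_forall fun t => h' (p.1, t))⟩

theorem eLpNorm_volume (hg : ModeratelyVarying g) (q : ℝ≥0∞) :
    (fun i => eLpNorm (g i) q volume) ≋ fun i => seqNorm q fun k => g i k := by
  simpa using (hg.eLpNorm_sampling q).comp fun i => (i, univ)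

theorem tailNorm_sampling (hg : ModeratelyVarying g) (q : ℝ≥0∞) :
    (fun p : ι × ℤ => tailNorm q (g p.1) p.2) ≋
      fun p => tailSum q (fun k => g p.1 k) p.2 := by
  have hfloor (k : ℤ) : (Int.floor ⁻¹' Ici k : Set ℝ) = Ici (k : ℝ) := by
    ext x
    simp [Int.le_floor]
  simpa only [tailNorm, tailSum, hfloor, restrict_Ioi_eq_restrict_Ici] using
    (hg.eLpNorm_sampling q).comp fun p : ι × ℤ => (p.1, Ici p.2)

theorem headNorm_sampling (hg : ModeratelyVarying g) (q : ℝ≥0∞) :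
    (fun p : ι × ℤ => headNorm q (g p.1) p.2) ≋
      fun p => headSum q (fun k => g p.1 k) p.2 := by
  have hfloor (k : ℤ) : (Int.floor ⁻¹' Iic k : Set ℝ) = Iio (k + 1 : ℝ) := by
    ext x
    simp [Int.floor_le_iff]
  calc (fun p : ι × ℤ => headNorm q (g p.1) p.2)
      ≋ fun p => headNorm q (g p.1) (p.2 + 1) :=
        (hg.head q).comparable_near (M := 1) (fun p => by simp) Prod.fst
    _ ≋ fun p => headSum q (fun k => g p.1 k) p.2 := by
        simpa only [headNorm, headSum, hfloor] using
          (hg.eLpNorm_sampling q).comp fun p : ι × ℤ => (p.1, Iic p.2)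

end ModeratelyVarying

/-- In the variable `x = log₂ t`, regular variation of index `s` of a weight `w`, expressed by
Potter's bounds; slow variation is the case `s = 0`. -/
def RegularlyVarying (w : ℝ → ℝ≥0∞) (s : ℝ) : Prop :=
  ∀ ε > 0, ∃ C ≠ ∞, ∀ x y, w x ≤ C * 2 ^ (s * (x - y) + ε * |x - y|) * w y

theorem SlowlyVarying.exists_le_mul {b : ℝ → ℝ} (hb : SlowlyVarying b) {ε : ℝ} (hε : 0 < ε) :
    ∃ C : ℝ, ∀ t u, 0 < t → t ≤ u → t ^ ε * b t ≤ C * (u ^ ε * b u) ∧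
      u ^ (-ε) * b u ≤ C * (t ^ (-ε) * b t) := by
  obtain ⟨⟨g, hg, C, hC, hgb⟩, h, hh, D, hD, hhb⟩ := hb.2.2 ε hε
  refine ⟨max (C * C) (D * D), fun t u ht htu => ?_⟩
  have hu : 0 < u := ht.trans_le htu
  have hbt := hb.2.1 t ht
  have hbu := hb.2.1 u hu
  constructor
  · calc t ^ ε * b t ≤ C * g t := (hgb t ht).2
      _ ≤ C * g u := by gcongr; exact hg ht hu htu
      _ ≤ C * (C * (u ^ ε * b u)) := by
        gcongr
        exact (inv_mul_le_iff₀ hC).1 (hgb u hu).1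
      _ = C * C * (u ^ ε * b u) := by ring
      _ ≤ _ := by gcongr; exact le_max_left _ _
  · calc u ^ (-ε) * b u ≤ D * h u := (hhb u hu).2
      _ ≤ D * h t := by gcongr; exact hh ht hu htu
      _ ≤ D * (D * (t ^ (-ε) * b t)) := by
        gcongr
        exact (inv_mul_le_iff₀ hD).1 (hhb t ht).1
      _ = D * D * (t ^ (-ε) * b t) := by ring
      _ ≤ _ := by gcongr; exact le_max_right _ _

theorem SlowlyVarying.regularlyVarying {b : ℝ → ℝ} (hb : SlowlyVarying b) :
    RegularlyVarying (fun x => ENNReal.ofReal (b (2 ^ x))) 0 := by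
  intro ε hε
  obtain ⟨C, hC⟩ := hb.exists_le_mul hε
  refine ⟨ENNReal.ofReal C, ofReal_ne_top, fun x y => ?_⟩
  have hby : 0 < b (2 ^ y) := hb.2.1 _ (Real.rpow_pos_of_pos two_pos _)
  rw [← ofReal_two_rpow, ← ENNReal.ofReal_mul' (by positivity), ← ENNReal.ofReal_mul' hby.le,
    zero_mul, zero_add]
  refine ENNReal.ofReal_le_ofReal ?_
  have key (p : ℝ) (h : ((2 : ℝ) ^ x) ^ p * b (2 ^ x) ≤ C * ((2 ^ y) ^ p * b (2 ^ y)))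
      (hp : p * (y - x) = ε * |x - y|) : b (2 ^ x) ≤ C * 2 ^ (ε * |x - y|) * b (2 ^ y) := by
    rw [← Real.rpow_mul two_pos.le, ← Real.rpow_mul two_pos.le] at h
    calc b (2 ^ x) = 2 ^ (-(x * p)) * (2 ^ (x * p) * b (2 ^ x)) := by
          rw [← mul_assoc, ← Real.rpow_add two_pos, neg_add_cancel, Real.rpow_zero, one_mul]
      _ ≤ 2 ^ (-(x * p)) * (C * (2 ^ (y * p) * b (2 ^ y))) := by gcongr
      _ = C * 2 ^ (-(x * p) + y * p) * b (2 ^ y) := by rw [Real.rpow_add two_pos]; ring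
      _ = C * 2 ^ (ε * |x - y|) * b (2 ^ y) := by rw [← hp]; ring_nf
  have hpow {z z' : ℝ} (h : z ≤ z') : (2 : ℝ) ^ z ≤ 2 ^ z' :=
    Real.rpow_le_rpow_of_exponent_le one_le_two h
  rcases le_total x y with hxy | hxy
  · refine key ε (hC _ _ (by positivity) (hpow hxy)).1 ?_
    rw [abs_of_nonpos (sub_nonpos.2 hxy), neg_sub]
  · refine key (-ε) (hC _ _ (by positivity) (hpow hxy)).2 ?_
    rw [abs_of_nonneg (sub_nonneg.2 hxy)]
    ring

theorem regularlyVarying_two_rpow (s : ℝ) : RegularlyVarying (fun x => 2 ^ (s * x)) s := by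
  refine fun ε hε => ⟨1, one_ne_top, fun x y => ?_⟩
  rw [one_mul, ← two_rpow_add]
  exact two_rpow_le_two_rpow (by nlinarith [mul_nonneg hε.le (abs_nonneg (x - y))])

namespace RegularlyVarying

variable {w w' : ℝ → ℝ≥0∞} {s s' : ℝ}

theorem mul (hw : RegularlyVarying w s) (hw' : RegularlyVarying w' s') :
    RegularlyVarying (fun x => w x * w' x) (s + s') := by
  intro ε hε
  obtain ⟨C, hC, h⟩ := hw (ε / 2) (half_pos hε)
  obtain ⟨D, hD, h'⟩ := hw' (ε / 2) (half_pos hε)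
  refine ⟨C * D, ENNReal.mul_ne_top hC hD, fun x y => ?_⟩
  calc w x * w' x
      ≤ (C * 2 ^ (s * (x - y) + ε / 2 * |x - y|) * w y) *
          (D * 2 ^ (s' * (x - y) + ε / 2 * |x - y|) * w' y) := mul_le_mul' (h x y) (h' x y)
    _ = C * D * (2 ^ (s * (x - y) + ε / 2 * |x - y|) * 2 ^ (s' * (x - y) + ε / 2 * |x - y|)) *
          (w y * w' y) := by ring
    _ = C * D * 2 ^ ((s + s') * (x - y) + ε * |x - y|) * (w y * w' y) := by
      rw [← two_rpow_add]
      ring_nf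

theorem inv (hw : RegularlyVarying w s) : RegularlyVarying (fun x => (w x)⁻¹) (-s) := by
  intro ε hε
  obtain ⟨C, hC, h⟩ := hw ε hε
  refine ⟨C + 1, by finiteness, fun x y => ?_⟩
  have hA : (C + 1) * (2 : ℝ≥0∞) ^ (-s * (x - y) + ε * |x - y|) ≠ 0 :=
    mul_ne_zero (by simp) (two_rpow_ne_zero _)
  have hA' : (C + 1) * (2 : ℝ≥0∞) ^ (-s * (x - y) + ε * |x - y|) ≠ ∞ :=
    ENNReal.mul_ne_top (by finiteness) (two_rpow_ne_top _)
  rw [← ENNReal.inv_le_inv, inv_inv, ENNReal.mul_inv (.inl hA) (.inl hA'), inv_inv,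
    ENNReal.inv_mul_le_iff hA hA']
  calc w y ≤ C * 2 ^ (s * (y - x) + ε * |y - x|) * w x := h y x
    _ ≤ (C + 1) * 2 ^ (s * (y - x) + ε * |y - x|) * w x := by gcongr; exact le_self_add
    _ = _ := by rw [abs_sub_comm]; ring_nf

theorem tail (hw : RegularlyVarying w s) (q : ℝ≥0∞) : RegularlyVarying (tailNorm q w) s := by
  intro ε hε
  obtain ⟨C, hC, h⟩ := hw ε hε
  refine ⟨C, hC, fun x y => tailNorm_le_of_translate ?_ fun z => ?_⟩
  · exact ENNReal.mul_ne_top hC (two_rpow_ne_top _)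
  · simpa using h (z + x) (z + y)

theorem moderatelyVarying (hw : RegularlyVarying w s) {ι : Type*} :
    ModeratelyVarying fun _ : ι => w := by
  intro M
  obtain ⟨C, hC, h⟩ := hw 1 one_pos
  refine ⟨C * 2 ^ (|s| * M + M), ENNReal.mul_ne_top hC (two_rpow_ne_top _), fun _ x y hxy => ?_⟩
  refine (h x y).trans ?_
  gcongr C * ?_ * _
  refine two_rpow_le_two_rpow ?_
  have := le_abs_self (s * (x - y))
  rw [abs_mul] at this
  nlinarith [abs_nonneg s]

theorem exists_le_of_le (hw : RegularlyVarying w s) {δ : ℝ} (hδ : δ < s) :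
    ∃ C ≠ ∞, ∀ x y, x ≤ y → w x ≤ C * 2 ^ (δ * (x - y)) * w y := by
  obtain ⟨C, hC, h⟩ := hw (s - δ) (sub_pos.2 hδ)
  refine ⟨C, hC, fun x y hxy => (h x y).trans_eq ?_⟩
  rw [abs_of_nonpos (sub_nonpos.2 hxy)]
  ring_nf

theorem exists_le_of_ge (hw : RegularlyVarying w s) {δ : ℝ} (hδ : s < δ) :
    ∃ C ≠ ∞, ∀ x y, y ≤ x → w x ≤ C * 2 ^ (δ * (x - y)) * w y := by
  obtain ⟨C, hC, h⟩ := hw (δ - s) (sub_pos.2 hδ)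
  refine ⟨C, hC, fun x y hxy => (h x y).trans_eq ?_⟩
  rw [abs_of_nonneg (sub_nonneg.2 hxy)]
  ring_nf

end RegularlyVarying

section ChangeOfVariable

variable {L : ℝ → ℝ} {s : ℝ}

theorem RegularlyVarying.exists_abs_sub_le (hL : RegularlyVarying (fun x => 2 ^ L x) s) {ε : ℝ}
    (hε : 0 < ε) : ∃ D ≥ 0, ∀ x y, |L x - L y - s * (x - y)| ≤ D + ε * |x - y| := by
  obtain ⟨C, hC, h⟩ := hL ε hε
  obtain ⟨D, hD⟩ := exists_le_two_rpow hC
  have upper (x y : ℝ) : L x - L y - s * (x - y) ≤ D + ε * |x - y| := by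
    have : (2 : ℝ≥0∞) ^ L x ≤ 2 ^ (D + (s * (x - y) + ε * |x - y|) + L y) := by
      rw [two_rpow_add, two_rpow_add]
      grw [← hD]
      exact h x y
    rw [← ofReal_two_rpow, ← ofReal_two_rpow, ENNReal.ofReal_le_ofReal_iff (by positivity),
      Real.rpow_le_rpow_left_iff one_lt_two] at this
    linarith
  refine ⟨D, by simpa using upper 0 0, fun x y => abs_le.2 ⟨?_, upper x y⟩⟩
  have := upper y x
  rw [abs_sub_comm] at this
  linarith

theorem RegularlyVarying.comp {w : ℝ → ℝ≥0∞} {τ : ℝ} (hw : RegularlyVarying w τ)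
    (hL : RegularlyVarying (fun x => 2 ^ L x) s) :
    RegularlyVarying (fun x => w (L x)) (τ * s) := by
  intro ε hε
  obtain ⟨D, _, hD⟩ := hL.exists_abs_sub_le (ε := min 1 (ε / (2 * (|τ| + 1)))) (by positivity)
  obtain ⟨C, hC, h⟩ := hw (ε / (2 * (|s| + 1))) (by positivity)
  refine ⟨C * 2 ^ (|τ| * D + ε / (2 * (|s| + 1)) * D),
    ENNReal.mul_ne_top hC (two_rpow_ne_top _), fun x y => (h (L x) (L y)).trans ?_⟩
  rw [mul_assoc C (2 ^ (|τ| * D + _)), ← two_rpow_add]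
  gcongr C * ?_ * _
  refine two_rpow_le_two_rpow ?_
  set η := min 1 (ε / (2 * (|τ| + 1)))
  set ε' := ε / (2 * (|s| + 1))
  have hτ : |τ| * η ≤ ε / 2 := by
    calc |τ| * η ≤ (|τ| + 1) * (ε / (2 * (|τ| + 1))) := by
          gcongr
          · linarith
          · exact min_le_right _ _
      _ = ε / 2 := by field_simp
  have hs : ε' * (|s| + η) ≤ ε / 2 := by
    calc ε' * (|s| + η) ≤ ε' * (|s| + 1) := by gcongr; exact min_le_left _ _
      _ = ε / 2 := by simp only [ε']; field_simp
  have hleft : τ * (L x - L y) ≤ τ * s * (x - y) + |τ| * (D + η * |x - y|) := by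
    have := (le_abs_self _).trans_eq (abs_mul τ (L x - L y - s * (x - y)))
    nlinarith [mul_le_mul_of_nonneg_left (hD x y) (abs_nonneg τ)]
  have hright : |L x - L y| ≤ |s| * |x - y| + (D + η * |x - y|) := by
    calc |L x - L y| = |s * (x - y) + (L x - L y - s * (x - y))| := by ring_nf
      _ ≤ |s| * |x - y| + (D + η * |x - y|) := by
        grw [abs_add_le, abs_mul, hD x y]
  have hε' : 0 ≤ ε' := by positivity
  nlinarith [mul_le_mul_of_nonneg_left hright hε',
    mul_le_mul_of_nonneg_right hτ (abs_nonneg (x - y)),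
    mul_le_mul_of_nonneg_right hs (abs_nonneg (x - y))]

theorem RegularlyVarying.exists_int_near (hs : 0 < s)
    (hL : RegularlyVarying (fun x => 2 ^ L x) s) : ∃ M : ℝ, ∀ y, ∃ k : ℤ, |L k - y| ≤ M := by
  obtain ⟨D, hD₀, hD⟩ := hL.exists_abs_sub_le (half_pos hs)
  refine ⟨D + 3 / 2 * s, fun y => ?_⟩
  obtain ⟨n, hn⟩ := exists_int_gt ((D + |y| + |L 0|) * 2 / s)
  have hn₀ : (0 : ℝ) ≤ n := le_trans (by positivity) hn.le
  rw [div_lt_iff₀ hs] at hn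
  have upper : y < L n := by
    have hbound := (abs_le.1 (hD n 0)).1
    rw [sub_zero, abs_of_nonneg hn₀] at hbound
    linarith [le_abs_self y, neg_abs_le (L 0)]
  have lower {k : ℤ} (hk : y < L k) : -n ≤ k := by
    by_contra! hlt
    have hk' : (k : ℝ) < -n := mod_cast hlt
    have hbound := (abs_le.1 (hD k 0)).2
    rw [sub_zero, abs_of_nonpos (hk'.le.trans (neg_nonpos.2 hn₀))] at hbound
    nlinarith [neg_abs_le y, le_abs_self (L 0)]
  obtain ⟨k, hk, hleast⟩ := Int.exists_least_of_bdd ⟨_, fun _ => lower⟩ ⟨n, upper⟩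
  have hprev : L (k - 1 : ℤ) ≤ y := not_lt.1 fun h => by linarith [hleast _ h]
  have hstep := (abs_le.1 (hD k (k - 1 : ℤ))).2
  push_cast at hstep hprev
  rw [_root_.sub_sub_cancel, abs_one] at hstep
  exact ⟨k, abs_le.2 ⟨by linarith, by linarith⟩⟩

-- `L` maps `ℤ` onto a relatively dense, boundedly overlapping set of reals.
theorem ModeratelyVarying.seqNorm_comp {ι : Type*} {g : ι → ℝ → ℝ≥0∞} (hg : ModeratelyVarying g)
    {q : ℝ≥0∞} (hq : q ≠ 0) (hs : 0 < s) (hL : RegularlyVarying (fun x => 2 ^ L x) s) :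
    (fun i => seqNorm q fun k => g i k) ≋ fun i => seqNorm q fun k => g i (L k) := by
  obtain ⟨M, hM⟩ := hL.exists_int_near hs
  choose φ hφ using hM
  obtain ⟨D, -, hD⟩ := hL.exists_abs_sub_le (half_pos hs)
  have hfloor (k : ℤ) : |L k - ⌊L k⌋| ≤ 1 := by
    rw [Int.self_sub_floor, Int.abs_fract]
    exact (Int.fract_lt_one _).le
  obtain ⟨C, hC, hg⟩ := hg (max M 1)
  constructor
  · refine seqNorm_dominated_of_near hq (fun j => ⌊L j⌋) (M + 1) ⟨C, hC, fun i k => ⟨φ k, ?_, ?_⟩⟩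
    · calc |(k : ℝ) - ⌊L (φ k)⌋| ≤ |k - L (φ k)| + |L (φ k) - ⌊L (φ k)⌋| := abs_sub_le _ _ _
        _ ≤ M + 1 := add_le_add (abs_sub_comm (k : ℝ) _ ▸ hφ k) (hfloor _)
    · exact hg _ _ _ ((abs_sub_comm _ _).trans_le ((hφ k).trans (le_max_left _ _)))
  · refine seqNorm_dominated_of_near hq (fun j => φ j) ((M + 1 + D) * 2 / s)
      ⟨C, hC, fun i k => ⟨⌊L k⌋, ?_, hg _ _ _ ((hfloor k).trans (le_max_right _ _))⟩⟩
    have hclose : |L k - L (φ ⌊L k⌋)| ≤ M + 1 := by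
      calc |L k - L (φ ⌊L k⌋)| ≤ |L k - ⌊L k⌋| + |⌊L k⌋ - L (φ ⌊L k⌋)| := abs_sub_le _ _ _
        _ ≤ 1 + M := add_le_add (hfloor k) (abs_sub_comm (⌊L k⌋ : ℝ) _ ▸ hφ _)
        _ = M + 1 := add_comm _ _
    rw [le_div_iff₀ hs]
    have hdist := abs_sub_abs_le_abs_sub (s * ((k : ℝ) - φ ⌊L k⌋)) (L k - L (φ ⌊L k⌋))
    rw [abs_sub_comm (s * _), abs_mul, abs_of_pos hs] at hdist
    linarith [hD k (φ ⌊L k⌋)]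

end ChangeOfVariable

section Hardy

variable {ι : Type*} {q : ℝ≥0∞} {x y : ι → ℤ → ℝ≥0∞} {δ : ℝ}

theorem seqNorm_le_of_le_decay (hq : q ≠ 0) {z : ℤ → ℝ≥0∞} {k : ℤ} {B : ℝ≥0∞}
    (h : ∀ j, z j ≤ B * decay δ (j - k)) : seqNorm q z ≤ seqNorm q (fun j => decay δ j) * B := by
  grw [seqNorm_mono h, seqNorm_const_mul hq, seqNorm_decay_sub, mul_comm]

theorem tailSum_le_of_le_decay (hq : q ≠ 0) {z : ℤ → ℝ≥0∞} {k : ℤ} {B : ℝ≥0∞}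
    (h : ∀ j, k ≤ j → z j ≤ B * decay δ (j - k)) :
    tailSum q z k ≤ seqNorm q (fun j => decay δ j) * B :=
  seqNorm_le_of_le_decay hq (indicator_le h)

theorem headSum_le_of_le_decay (hq : q ≠ 0) {z : ℤ → ℝ≥0∞} {k m : ℤ} {B : ℝ≥0∞}
    (h : ∀ j, j ≤ k → z j ≤ B * decay δ (j - m)) :
    headSum q z k ≤ seqNorm q (fun j => decay δ j) * B :=
  seqNorm_le_of_le_decay hq (indicator_le h)

theorem tailSum_le_seqNorm (z : ℤ → ℝ≥0∞) (k : ℤ) : tailSum q z k ≤ seqNorm q z :=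
  seqNorm_mono (indicator_le_self _ _)

theorem tailSum_const_mul (hq : q ≠ 0) (c : ℝ≥0∞) (z : ℤ → ℝ≥0∞) (k : ℤ) :
    tailSum q (fun j => c * z j) k = c * tailSum q z k := by
  rw [tailSum, tailSum, ← seqNorm_const_mul hq]
  congr 1
  exact funext fun j => indicator_const_mul _ _ _ j

theorem tailSum_le_const_mul_add {z z₁ z₂ : ℤ → ℝ≥0∞} {A : ℝ≥0∞} (hA : A ≠ ∞)
    (h : ∀ j, z j ≤ A * (z₁ j + z₂ j)) (k : ℤ) :
    tailSum q z k ≤ A * LpAddConst q * (tailSum q z₁ k + tailSum q z₂ k) := by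
  have hind (j : ℤ) : (Ici k).indicator z j ≤
      A * ((Ici k).indicator z₁ + (Ici k).indicator z₂) j := by
    by_cases hj : k ≤ j <;> simp [hj, h j]
  grw [tailSum, seqNorm_le_const_mul hA hind, seqNorm_add_le, mul_assoc]
  rfl

theorem le_tailSum (hq : q ≠ 0) (z : ℤ → ℝ≥0∞) {j k : ℤ} (h : k ≤ j) : z j ≤ tailSum q z k := by
  simpa [h, tailSum] using le_seqNorm hq ((Ici k).indicator z) j

theorem le_headSum (hq : q ≠ 0) (z : ℤ → ℝ≥0∞) {j k : ℤ} (h : j ≤ k) : z j ≤ headSum q z k := by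
  simpa [h, headSum] using le_seqNorm hq ((Iic k).indicator z) j

-- Schur test: half of the decay of `W` pays for the growth allowed in `hx`, the other half is
-- summed.
theorem seqNorm_mul_dominated (hq : q ≠ 0) (hδ : 0 < δ) {W : ℤ → ℝ≥0∞} (r : ℤ → ℤ → Prop)
    (hW : ∃ C ≠ ∞, ∀ k j, r k j → W k ≤ C * decay (2 * δ) (k - j) * W j)
    (hx : ∃ C ≠ ∞, ∀ i k B, (∀ j, r k j → y i j ≤ B * decay δ (j - k)) → x i k ≤ C * B) :
    (fun i => seqNorm q fun k => W k * x i k) ≲ fun i => seqNorm q fun k => W k * y i k := by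
  obtain ⟨C, hC, hW⟩ := hW
  obtain ⟨D, hD, hx⟩ := hx
  refine seqNorm_dominated_of_decay hq hδ id ⟨D * C, ENNReal.mul_ne_top hD hC, fun ⟨i, k⟩ => ?_⟩
  have hcancel (z : ℝ) : decay δ z * (decay δ z)⁻¹ = 1 :=
    ENNReal.mul_inv_cancel (decay_ne_zero δ z) (decay_ne_top δ z)
  have hB := hx i k (⨆ (j) (_ : r k j), (decay δ (j - k))⁻¹ * y i j) fun j hj => by
    rw [mul_comm]
    calc y i j = decay δ (j - k) * ((decay δ (j - k))⁻¹ * y i j) := by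
          rw [← mul_assoc, hcancel, one_mul]
      _ ≤ _ := by
        gcongr
        exact le_iSup₂ (f := fun j (_ : r k j) => (decay δ (j - k))⁻¹ * y i j) j hj
  have hterm (j : ℤ) (hj : r k j) :
      W k * ((decay δ (j - k))⁻¹ * y i j) ≤ C * (decay δ (k - j) * (W j * y i j)) := by
    have hsplit : decay (2 * δ) (k - j) = decay δ (k - j) * decay δ (k - j) := by
      rw [decay, decay, ← two_rpow_add]
      ring_nf
    rw [decay_sub_comm]
    calc W k * ((decay δ (k - j))⁻¹ * y i j)
        ≤ C * (decay δ (k - j) * decay δ (k - j)) * W j * ((decay δ (k - j))⁻¹ * y i j) := by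
          grw [hW k j hj, hsplit]
      _ = C * (decay δ (k - j) * (W j * y i j)) * (decay δ (k - j) * (decay δ (k - j))⁻¹) := by ring
      _ = _ := by rw [hcancel, mul_one]
  calc W k * x i k
      ≤ W k * (D * ⨆ (j) (_ : r k j), (decay δ (j - k))⁻¹ * y i j) := by gcongr
    _ = D * ⨆ (j) (_ : r k j), W k * ((decay δ (j - k))⁻¹ * y i j) := by
      simp only [ENNReal.mul_iSup, mul_left_comm]
    _ ≤ D * ⨆ j : ℤ, C * (decay δ (k - j) * (W j * y i j)) := by
      gcongr with j
      exact iSup_le (hterm j)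
    _ = D * C * ⨆ j : ℤ, decay δ (k - j) * (W j * y i j) := by rw [← ENNReal.mul_iSup, mul_assoc]

theorem seqNorm_mul_tailSum (hq : q ≠ 0) {r : ℝ≥0∞} (hr : r ≠ 0) {W : ℝ → ℝ≥0∞} {s : ℝ}
    (hs : 0 < s) (hW : RegularlyVarying W s) (y : ι → ℤ → ℝ≥0∞) :
    (fun i => seqNorm r fun k => W k * tailSum q (y i) k) ≋
      fun i => seqNorm r fun k => W k * y i k := by
  constructor
  · obtain ⟨C, hC, hW⟩ := hW.exists_le_of_le (half_lt_self hs)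
    refine seqNorm_mul_dominated hr (δ := s / 4) (by positivity) (fun k j => k ≤ j)
      ⟨C, hC, fun k j hkj => (hW k j (mod_cast hkj)).trans_eq ?_⟩
      ⟨_, seqNorm_decay_ne_top hq (by positivity), fun i k B => tailSum_le_of_le_decay hq⟩
    rw [decay, abs_of_nonpos (sub_nonpos.2 (mod_cast hkj))]
    ring_nf
  · refine .of_le fun i => seqNorm_mono fun k => ?_
    gcongr
    exact le_tailSum hq (y i) le_rfl

end Hardy

/-- The functional `Nx` behaves like an interpolation norm whose fundamental weight is `c`: it
dominates every term `c k * κ f k` and is controlled by any bound on these terms which decays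
geometrically away from some index. -/
structure IsOfClass {ι : Type*} (κ : ι → ℤ → ℝ≥0∞) (c : ℤ → ℝ≥0∞) (Nx : ι → ℝ≥0∞) : Prop where
  term_dominated : (fun p : ι × ℤ => c p.2 * κ p.1 p.2) ≲ fun p => Nx p.1
  le_of_decay : ∀ δ > 0, ∃ C ≠ ∞, ∀ (f : ι) (k : ℤ) (B : ℝ≥0∞),
    (∀ j, c j * κ f j ≤ B * decay δ (j - k)) → Nx f ≤ C * B

section Class

variable {ι : Type*} {κ : ι → ℤ → ℝ≥0∞} {c c' : ℤ → ℝ≥0∞} {Nx Ny : ι → ℝ≥0∞}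

theorem IsOfClass.congr (h : IsOfClass κ c Nx) (hc : c ≋ c') (hN : Nx ≋ Ny) :
    IsOfClass κ c' Ny where
  term_dominated :=
    calc (fun p : ι × ℤ => c' p.2 * κ p.1 p.2)
        ≲ fun p => c p.2 * κ p.1 p.2 := (hc.2.comp Prod.snd).mul (.of_le fun _ => le_rfl)
      _ ≲ fun p => Nx p.1 := h.term_dominated
      _ ≲ fun p => Ny p.1 := hN.1.comp Prod.fst
  le_of_decay δ hδ := by
    obtain ⟨C, hC, h⟩ := h.le_of_decay δ hδ
    obtain ⟨D, hD, hc⟩ := hc.1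
    obtain ⟨D', hD', hN⟩ := hN.2
    refine ⟨D' * (C * D), by finiteness, fun f k B hB => ?_⟩
    rw [mul_assoc, mul_assoc]
    grw [hN f, h f k (D * B) fun j => ?_]
    grw [hc j, mul_assoc, hB j, mul_assoc]

theorem headSum_le_of_mul_le_decay {q : ℝ≥0∞} (hq : q ≠ 0) {B : ℝ → ℝ≥0∞}
    (hB : RegularlyVarying B 0) (hB₀ : ∀ x, B x ≠ 0) (hB' : ∀ x, B x ≠ ∞) {δ : ℝ} (hδ : 0 < δ) :
    ∃ C ≠ ∞, ∀ (z : ℤ → ℝ≥0∞) (k i : ℤ) (M : ℝ≥0∞),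
      (∀ j : ℤ, z j * B j ≤ M * decay δ (j - k)) →
        headSum q z i ≤ C * (M * decay δ ((min i k : ℤ) - k) * (B (min i k : ℤ))⁻¹) := by
  obtain ⟨C, hC, h⟩ := hB.inv (δ / 2) (half_pos hδ)
  refine ⟨seqNorm q (fun j => decay (δ / 2) j) * C,
    ENNReal.mul_ne_top (seqNorm_decay_ne_top hq (half_pos hδ)) hC, fun z k i M hz => ?_⟩
  set m := min i k
  rw [mul_assoc]
  refine headSum_le_of_le_decay hq (m := m) fun j hj => ?_
  have hdecay : decay δ (j - k) * 2 ^ (δ / 2 * |(j - m : ℝ)|) ≤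
      decay δ (m - k) * decay (δ / 2) (j - m) := by
    rw [decay, decay, decay, ← two_rpow_add, ← two_rpow_add]
    have htri : |(j - m : ℝ)| + |(m - k : ℝ)| ≤ |(j - k : ℝ)| := by
      obtain ⟨hm, hik⟩ | ⟨hm, _⟩ : m = i ∧ i ≤ k ∨ m = k ∧ k ≤ i := by grind
      · have hjm : (j : ℝ) ≤ m := by exact_mod_cast hm ▸ hj
        have hmk : (m : ℝ) ≤ k := by exact_mod_cast hm ▸ hik
        rw [abs_of_nonpos (sub_nonpos.2 hjm), abs_of_nonpos (sub_nonpos.2 hmk),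
          abs_of_nonpos (sub_nonpos.2 (hjm.trans hmk))]
        linarith
      · simp [hm]
    exact two_rpow_le_two_rpow (by nlinarith)
  calc z j = z j * B j * (B j)⁻¹ := by
        rw [mul_assoc, ENNReal.mul_inv_cancel (hB₀ _) (hB' _), mul_one]
    _ ≤ M * decay δ (j - k) * (C * 2 ^ (δ / 2 * |(j - m : ℝ)|) * (B m)⁻¹) := by
      refine mul_le_mul' (hz j) ?_
      simpa using h j m
    _ = C * M * (B m)⁻¹ * (decay δ (j - k) * 2 ^ (δ / 2 * |(j - m : ℝ)|)) := by ring
    _ ≤ C * M * (B m)⁻¹ * (decay δ (m - k) * decay (δ / 2) (j - m)) := by gcongr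
    _ = _ := by ring

theorem RegularlyVarying.tailSum_mul_inv_le {β : ℝ → ℝ≥0∞} (hβ : RegularlyVarying β 0) (r : ℝ≥0∞) :
    ∃ D ≠ ∞, ∀ k : ℤ, tailSum r (fun i => β i) k * (tailNorm r β k)⁻¹ ≤ D := by
  obtain ⟨D, hD, h⟩ := ((hβ.moderatelyVarying (ι := Unit)).tailNorm_sampling r).2
  refine ⟨D, hD, fun k => ?_⟩
  rw [← div_eq_mul_inv]
  exact ENNReal.div_le_of_le_mul (h ((), k))

section TailWeight

variable {q r : ℝ≥0∞} {β : ℝ → ℝ≥0∞}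

theorem mul_headSum_le_of_decay (hq : q ≠ 0) (hr : r ≠ 0) (hβ : RegularlyVarying β 0)
    (hβ₀ : ∀ x, tailNorm r β x ≠ 0) (hβ' : ∀ x, tailNorm r β x ≠ ∞) {δ : ℝ} (hδ : 0 < δ) :
    ∃ C ≠ ∞, ∀ (z : ℤ → ℝ≥0∞) (k i : ℤ) (M : ℝ≥0∞),
      (∀ j : ℤ, z j * tailNorm r β j ≤ M * decay δ (j - k)) →
        β i * headSum q z i ≤
          C * M * (decay δ (i - k) + (tailNorm r β k)⁻¹ * (Ici k).indicator (fun i => β i) i) := by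
  obtain ⟨C, hC, hhead⟩ := headSum_le_of_mul_le_decay hq (hβ.tail r) hβ₀ hβ' hδ
  obtain ⟨D, hD, htail⟩ := hβ.tailSum_mul_inv_le r
  refine ⟨C * (D + 1), by finiteness, fun z k i M hz => ?_⟩
  have hi := hhead z k i M hz
  rcases lt_or_ge i k with hik | hki
  · rw [min_eq_left hik.le] at hi
    have hβi := le_tailSum hr (fun i : ℤ => β i) (le_refl i)
    calc β i * headSum q z i
        ≤ tailSum r (fun i => β i) i * (C * (M * decay δ (i - k) * (tailNorm r β i)⁻¹)) := by
          gcongr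
      _ = C * (tailSum r (fun i => β i) i * (tailNorm r β i)⁻¹) * M * decay δ (i - k) := by ring
      _ ≤ _ := by
          grw [htail i]
          gcongr
          · exact le_self_add
          · exact le_self_add
  · rw [min_eq_right hki, sub_self, decay_zero, mul_one] at hi
    rw [indicator_of_mem (mem_Ici.2 hki)]
    calc β i * headSum q z i ≤ β i * (C * (M * (tailNorm r β k)⁻¹)) := by gcongr
      _ = C * 1 * M * ((tailNorm r β k)⁻¹ * β i) := by ring
      _ ≤ _ := by
          gcongr
          · exact le_add_self
          · exact le_add_self

theorem seqNorm_mul_headSum_le_of_decay (hq : q ≠ 0) (hr : r ≠ 0) (hβ : RegularlyVarying β 0)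
    (hβ₀ : ∀ x, tailNorm r β x ≠ 0) (hβ' : ∀ x, tailNorm r β x ≠ ∞) {δ : ℝ} (hδ : 0 < δ) :
    ∃ C ≠ ∞, ∀ (z : ℤ → ℝ≥0∞) (k : ℤ) (M : ℝ≥0∞),
      (∀ j : ℤ, z j * tailNorm r β j ≤ M * decay δ (j - k)) →
        seqNorm r (fun i => β i * headSum q z i) ≤ C * M := by
  obtain ⟨C, hC, h⟩ := mul_headSum_le_of_decay hq hr hβ hβ₀ hβ' hδ
  obtain ⟨D, hD, htail⟩ := hβ.tailSum_mul_inv_le r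
  have hsum := seqNorm_decay_ne_top hr hδ
  have hadd := (LpAddConst_lt_top r).ne
  refine ⟨C * (LpAddConst r * (seqNorm r (fun i => decay δ i) + D)), by finiteness,
    fun z k M hz => ?_⟩
  calc seqNorm r (fun i => β i * headSum q z i)
      ≤ C * M * seqNorm r ((fun i : ℤ => decay δ (i - k)) + fun i : ℤ =>
          (tailNorm r β k)⁻¹ * (Ici k).indicator (fun i => β i) i) := by
        rw [← seqNorm_const_mul hr]
        exact seqNorm_mono fun i => h z k i M hz
    _ ≤ C * M * (LpAddConst r * (seqNorm r (fun i => decay δ i) +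
          (tailNorm r β k)⁻¹ * tailSum r (fun i => β i) k)) := by
        grw [seqNorm_add_le, seqNorm_const_mul hr, seqNorm_decay_sub]
        rfl
    _ ≤ C * M * (LpAddConst r * (seqNorm r (fun i => decay δ i) + D)) := by
        grw [mul_comm _ (tailSum _ _ _), htail k]
    _ = _ := by ring

theorem isOfClass_seqNorm_mul_headSum (hq : q ≠ 0) (hr : r ≠ 0) (hβ : RegularlyVarying β 0)
    (hβ₀ : ∀ x, tailNorm r β x ≠ 0) (hβ' : ∀ x, tailNorm r β x ≠ ∞) (u : ℤ → ℝ≥0∞)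
    (κ : ι → ℤ → ℝ≥0∞) :
    IsOfClass κ (fun k => u k * tailNorm r β k)
      fun f => seqNorm r fun i => β i * headSum q (fun j => u j * κ f j) i where
  term_dominated := by
    obtain ⟨D, hD, htail⟩ := ((hβ.moderatelyVarying (ι := Unit)).tailNorm_sampling r).1
    refine ⟨D, hD, fun ⟨f, k⟩ => ?_⟩
    calc u k * tailNorm r β k * κ f k
        ≤ u k * (D * tailSum r (fun i => β i) k) * κ f k := by
          gcongr
          exact htail ((), k)
      _ = D * seqNorm r (fun i => u k * κ f k * (Ici k).indicator (fun i => β i) i) := by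
          rw [seqNorm_const_mul hr, tailSum]
          ring
      _ ≤ _ := by
          gcongr
          refine seqNorm_mono fun i => ?_
          by_cases hi : k ≤ i
          · rw [indicator_of_mem (mem_Ici.2 hi), mul_comm]
            gcongr
            exact le_headSum hq (fun j => u j * κ f j) hi
          · simp [hi]
  le_of_decay δ hδ := by
    obtain ⟨C, hC, h⟩ := seqNorm_mul_headSum_le_of_decay hq hr hβ hβ₀ hβ' hδ
    refine ⟨C, hC, fun f k M hM => h _ k M fun j => ?_⟩
    rw [mul_right_comm]
    exact hM j

end TailWeight

end Class

/-- The part of the notion of a quasi-norm on an additive group that the real method uses; the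
value `∞` marks the elements outside the quasi-normed space. -/
structure IsQuasiNorm {X : Type*} [AddCommGroup X] (N : X → ℝ≥0∞) : Prop where
  map_zero : N 0 = 0
  map_neg : ∀ f, N (-f) = N f
  map_add_dominated : (fun p : X × X => N (p.1 + p.2)) ≲ fun p => N p.1 + N p.2

theorem QuasiBanach.isQuasiNorm (A : QuasiBanach E) : IsQuasiNorm A.N where
  map_zero := A.zero
  map_neg f := by simpa using A.smul (-1) f
  map_add_dominated :=
    let ⟨C, _, hC, h⟩ := A.quasi
    ⟨C, hC, fun p => h p.1 p.2⟩

/-- The K-functional in the variable `x = log₂ t`. -/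
def logK {X : Type*} [AddCommGroup X] (N₀ N₁ : X → ℝ≥0∞) (f : X) (x : ℝ) : ℝ≥0∞ :=
  Kf N₀ N₁ (2 ^ x) f

section KFunctional

variable {X : Type*} [AddCommGroup X] {N₀ N₁ : X → ℝ≥0∞}

theorem logK_eq_iInf (f : X) (x : ℝ) : logK N₀ N₁ f x = ⨅ g, N₀ g + 2 ^ x * N₁ (f - g) := by
  simp only [logK, Kf, ofReal_two_rpow]

theorem logK_le (f g : X) (x : ℝ) : logK N₀ N₁ f x ≤ N₀ g + 2 ^ x * N₁ (f - g) :=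
  logK_eq_iInf (N₀ := N₀) (N₁ := N₁) f x ▸ iInf_le _ g

theorem logK_le_left (h₁ : N₁ 0 = 0) (f : X) (x : ℝ) : logK N₀ N₁ f x ≤ N₀ f := by
  simpa [h₁] using logK_le (N₀ := N₀) (N₁ := N₁) f f x

theorem logK_le_right (h₀ : N₀ 0 = 0) (f : X) (x : ℝ) : logK N₀ N₁ f x ≤ 2 ^ x * N₁ f := by
  simpa [h₀] using logK_le (N₀ := N₀) (N₁ := N₁) f 0 x

theorem logK_le_two_rpow_mul (f : X) {x y d : ℝ} (hd : 0 ≤ d) (hxy : x - y ≤ d) :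
    logK N₀ N₁ f x ≤ 2 ^ d * logK N₀ N₁ f y := by
  rw [logK_eq_iInf f y, ENNReal.mul_iInf (fun h => absurd h (two_rpow_ne_top d))]
  refine le_iInf fun g => (logK_le f g x).trans ?_
  rw [mul_add, ← mul_assoc, ← two_rpow_add]
  gcongr
  · simpa using mul_le_mul_left (two_rpow_le_two_rpow hd) (N₀ g)
  · exact one_le_two
  · linarith

theorem moderatelyVarying_logK : ModeratelyVarying (logK N₀ N₁) := fun M =>
  ⟨2 ^ max M 0, two_rpow_ne_top _, fun f _ _ h =>
    logK_le_two_rpow_mul f (le_max_right _ _) ((le_abs_self _).trans (h.trans (le_max_left _ _)))⟩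

theorem logK_neg (h₀ : ∀ f, N₀ (-f) = N₀ f) (h₁ : ∀ f, N₁ (-f) = N₁ f) (f : X) (x : ℝ) :
    logK N₀ N₁ (-f) x = logK N₀ N₁ f x := by
  rw [logK_eq_iInf, logK_eq_iInf]
  refine (Equiv.neg X).iInf_congr fun g => ?_
  rw [Equiv.neg_apply, h₀, ← h₁ (f - -g), neg_sub', neg_neg, sub_eq_add_neg]

theorem logK_add_dominated (h₀ : IsQuasiNorm N₀) (h₁ : IsQuasiNorm N₁) :
    (fun p : (X × X) × ℝ => logK N₀ N₁ (p.1.1 + p.1.2) p.2) ≲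
      fun p => logK N₀ N₁ p.1.1 p.2 + logK N₀ N₁ p.1.2 p.2 := by
  obtain ⟨C, hC, hN₀⟩ := h₀.map_add_dominated
  obtain ⟨D, hD, hN₁⟩ := h₁.map_add_dominated
  refine ⟨C + D, ENNReal.add_ne_top.2 ⟨hC, hD⟩, fun ⟨⟨f, g⟩, x⟩ => ?_⟩
  dsimp only
  rw [logK_eq_iInf f, logK_eq_iInf g, ENNReal.iInf_add,
    ENNReal.mul_iInf (fun h => absurd h (by finiteness))]
  refine le_iInf fun u => ?_
  rw [ENNReal.add_iInf, ENNReal.mul_iInf (fun h => absurd h (by finiteness))]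
  refine le_iInf fun v => ?_
  calc logK N₀ N₁ (f + g) x
      ≤ N₀ (u + v) + 2 ^ x * N₁ ((f - u) + (g - v)) := by
        rw [← add_sub_add_comm]
        exact logK_le _ _ _
    _ ≤ C * (N₀ u + N₀ v) + 2 ^ x * (D * (N₁ (f - u) + N₁ (g - v))) := by
        gcongr
        · exact hN₀ (u, v)
        · exact hN₁ (f - u, g - v)
    _ ≤ (C + D) * (N₀ u + N₀ v) + 2 ^ x * ((C + D) * (N₁ (f - u) + N₁ (g - v))) := by
        gcongr
        · exact le_self_add
        · exact le_add_self
    _ = _ := by ring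

theorem RegularlyVarying.mul_two_rpow_min_dominated {w : ℝ → ℝ≥0∞} {θ δ : ℝ}
    (hw : RegularlyVarying w (-θ)) (hδ : δ < θ) (hδ' : δ < 1 - θ) :
    ∃ C ≠ ∞, ∀ x y, w x * 2 ^ min 0 (x - y) ≤ C * w y * decay δ (x - y) := by
  obtain ⟨C, hC, h⟩ := hw.exists_le_of_le (δ := δ - 1) (by linarith)
  obtain ⟨D, hD, h'⟩ := hw.exists_le_of_ge (neg_lt_neg hδ)
  refine ⟨C + D, by finiteness, fun x y => ?_⟩
  rw [decay]
  rcases le_total x y with hxy | hxy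
  · rw [min_eq_right (sub_nonpos.2 hxy), abs_of_nonpos (sub_nonpos.2 hxy)]
    calc w x * 2 ^ (x - y) ≤ C * 2 ^ ((δ - 1) * (x - y)) * w y * 2 ^ (x - y) := by
          grw [h x y hxy]
      _ = C * w y * (2 ^ ((δ - 1) * (x - y)) * 2 ^ (x - y)) := by ring
      _ = C * w y * 2 ^ (-(δ * -(x - y))) := by rw [← two_rpow_add]; ring_nf
      _ ≤ _ := by gcongr; exact le_self_add
  · rw [min_eq_left (sub_nonneg.2 hxy), abs_of_nonneg (sub_nonneg.2 hxy), ENNReal.rpow_zero,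
      mul_one, ← neg_mul]
    calc w x ≤ D * 2 ^ (-δ * (x - y)) * w y := h' x y hxy
      _ = D * w y * 2 ^ (-δ * (x - y)) := by ring
      _ ≤ _ := by gcongr; exact le_add_self

end KFunctional

section Holmstedt

variable {X : Type*} [AddCommGroup X] {N₀ N₁ : X → ℝ≥0∞}

theorem logK_le_indicator_add (h₀ : IsQuasiNorm N₀) (h₁ : IsQuasiNorm N₁) :
    ∃ C ≠ ∞, ∀ (f g : X) (k j : ℤ),
      logK N₀ N₁ g j ≤ C * ((Iic k).indicator (fun j : ℤ => logK N₀ N₁ f j) j +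
        2 ^ min 0 (j - k : ℝ) * (N₀ g + 2 ^ (k : ℝ) * N₁ (f - g))) ∧
      logK N₀ N₁ (f - g) j ≤ C * ((Ici k).indicator (fun j : ℤ => logK N₀ N₁ f j) j +
        2 ^ min 0 (j - k : ℝ) * (N₀ g + 2 ^ (k : ℝ) * N₁ (f - g))) := by
  obtain ⟨C, hC, hadd⟩ := logK_add_dominated h₀ h₁
  refine ⟨C + 1, by finiteness, fun f g k j => ?_⟩
  set M := N₀ g + 2 ^ (k : ℝ) * N₁ (f - g)
  have hg : logK N₀ N₁ g j ≤ M := (logK_le_left h₁.map_zero g j).trans le_self_add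
  have hfg : logK N₀ N₁ (f - g) j ≤ 2 ^ (j - k : ℝ) * M := by
    calc logK N₀ N₁ (f - g) j ≤ 2 ^ (j : ℝ) * N₁ (f - g) := logK_le_right h₀.map_zero _ _
      _ = 2 ^ (j - k : ℝ) * (2 ^ (k : ℝ) * N₁ (f - g)) := by
        rw [← mul_assoc, ← two_rpow_add, sub_add_cancel]
      _ ≤ 2 ^ (j - k : ℝ) * M := by gcongr; exact le_add_self
  have hone {A B : ℝ≥0∞} (h : A ≤ B) : A ≤ (C + 1) * B :=
    h.trans (le_mul_of_one_le_left' le_add_self)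
  rcases le_total j k with hjk | hkj
  · rw [min_eq_right (sub_nonpos.2 (mod_cast hjk)), indicator_of_mem (mem_Iic.2 hjk)]
    refine ⟨?_, hone (hfg.trans le_add_self)⟩
    have hsplit := hadd ((f, -(f - g)), j)
    dsimp only at hsplit
    rw [logK_neg h₀.map_neg h₁.map_neg, ← sub_eq_add_neg, _root_.sub_sub_cancel] at hsplit
    grw [hsplit, hfg]
    gcongr
    exact le_self_add
  · rw [min_eq_left (sub_nonneg.2 (mod_cast hkj)), ENNReal.rpow_zero, one_mul,
      indicator_of_mem (mem_Ici.2 hkj)]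
    refine ⟨hone (hg.trans le_add_self), ?_⟩
    have hsplit := hadd ((f, -g), j)
    dsimp only at hsplit
    rw [logK_neg h₀.map_neg h₁.map_neg, ← sub_eq_add_neg] at hsplit
    grw [hsplit, hg]
    gcongr
    exact le_self_add

variable {L : ℝ → ℝ} {v : ℝ → ℝ≥0∞} {θ₀ θ₁ δ : ℝ} {q : ℝ≥0∞} {Nx Ny : X → ℝ≥0∞}

theorem IsOfClass.le_of_near (h₀ : IsQuasiNorm N₀) (h₁ : IsQuasiNorm N₁) {c : ℝ → ℝ≥0∞}
    (hc : RegularlyVarying c (-θ₀)) (hδ₀ : 0 < δ) (hδ : δ < θ₀) (hδ' : δ < 1 - θ₀)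
    (hX : IsOfClass (fun f k => logK N₀ N₁ f k) (fun k => c k) Nx) :
    ∃ C ≠ ∞, ∀ (f g : X) (k : ℤ) (B : ℝ≥0∞),
      (∀ j : ℤ, j ≤ k → c j * logK N₀ N₁ f j ≤ B * decay δ (j - k)) →
        Nx g ≤ C * (B + c k * (N₀ g + 2 ^ (k : ℝ) * N₁ (f - g))) := by
  obtain ⟨C, hC, hlogK⟩ := logK_le_indicator_add h₀ h₁
  obtain ⟨D, hD, hdecay⟩ := hc.mul_two_rpow_min_dominated hδ hδ'
  obtain ⟨A, hA, hclass⟩ := hX.le_of_decay δ hδ₀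
  refine ⟨A * (C * (1 + D)), by finiteness, fun f g k B hB => ?_⟩
  set M := N₀ g + 2 ^ (k : ℝ) * N₁ (f - g)
  rw [mul_assoc]
  refine hclass g k _ fun j => ?_
  have hhead : c j * (Iic k).indicator (fun j : ℤ => logK N₀ N₁ f j) j ≤ B * decay δ (j - k) := by
    by_cases hj : j ≤ k
    · simpa [hj] using hB j hj
    · simp [hj]
  calc c j * logK N₀ N₁ g j
      ≤ c j * (C * ((Iic k).indicator (fun j : ℤ => logK N₀ N₁ f j) j +
          2 ^ min 0 (j - k : ℝ) * M)) := by
        gcongr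
        exact (hlogK f g k j).1
    _ = C * (c j * (Iic k).indicator (fun j : ℤ => logK N₀ N₁ f j) j +
          c j * 2 ^ min 0 (j - k : ℝ) * M) := by ring
    _ ≤ C * (B * decay δ (j - k) + D * c k * decay δ (j - k) * M) := by grw [hhead, hdecay j k]
    _ = C * (1 * B + D * (c k * M)) * decay δ (j - k) := by ring
    _ ≤ C * ((1 + D) * B + (1 + D) * (c k * M)) * decay δ (j - k) := by
        gcongr
        · exact le_self_add
        · exact le_add_self
    _ = _ := by ring

theorem seqNorm_mul_logK_sub_le (h₀ : IsQuasiNorm N₀) (h₁ : IsQuasiNorm N₁) (hq : q ≠ 0)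
    (hv : RegularlyVarying v (-θ₁)) (hθ₁ : 0 < θ₁) (hθ₁' : θ₁ < 1) :
    ∃ C ≠ ∞, ∀ (f g : X) (k : ℤ), seqNorm q (fun j => v j * logK N₀ N₁ (f - g) j) ≤
      C * (tailSum q (fun j => v j * logK N₀ N₁ f j) k +
        v k * (N₀ g + 2 ^ (k : ℝ) * N₁ (f - g))) := by
  obtain ⟨δ, hδ₀, hδ⟩ := exists_between (lt_min hθ₁ (sub_pos.2 hθ₁'))
  obtain ⟨C, hC, hlogK⟩ := logK_le_indicator_add h₀ h₁
  obtain ⟨D, hD, hdecay⟩ := hv.mul_two_rpow_min_dominated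
    (hδ.trans_le (min_le_left _ _)) (hδ.trans_le (min_le_right _ _))
  have hsum := seqNorm_decay_ne_top hq hδ₀
  have hadd := (LpAddConst_lt_top q).ne
  refine ⟨C * LpAddConst q * (1 + D * seqNorm q fun j => decay δ j), by finiteness,
    fun f g k => ?_⟩
  set M := N₀ g + 2 ^ (k : ℝ) * N₁ (f - g)
  set T := (Ici k).indicator fun j : ℤ => v j * logK N₀ N₁ f j
  have hT (j : ℤ) : T j = v j * (Ici k).indicator (fun j : ℤ => logK N₀ N₁ f j) j :=
    indicator_mul_right _ _ _
  have hterm (j : ℤ) : v j * logK N₀ N₁ (f - g) j ≤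
      C * (T + fun j : ℤ => D * v k * M * decay δ (j - k)) j := by
    calc v j * logK N₀ N₁ (f - g) j
        ≤ v j * (C * ((Ici k).indicator (fun j : ℤ => logK N₀ N₁ f j) j +
            2 ^ min 0 (j - k : ℝ) * M)) := by
          gcongr
          exact (hlogK f g k j).2
      _ = C * (T j + v j * 2 ^ min 0 (j - k : ℝ) * M) := by
          rw [hT j]
          ring
      _ ≤ C * (T j + D * v k * decay δ (j - k) * M) := by grw [hdecay j k]
      _ = _ := by rw [Pi.add_apply]; ring
  calc seqNorm q (fun j => v j * logK N₀ N₁ (f - g) j)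
      ≤ C * (LpAddConst q * (seqNorm q T + D * v k * M * seqNorm q fun j => decay δ j)) := by
        grw [seqNorm_le_const_mul hC hterm, seqNorm_add_le, seqNorm_const_mul hq, seqNorm_decay_sub]
    _ = C * LpAddConst q * (1 * seqNorm q T + (D * seqNorm q fun j => decay δ j) * (v k * M)) := by
        ring
    _ ≤ C * LpAddConst q * ((1 + D * seqNorm q fun j => decay δ j) * seqNorm q T +
          (1 + D * seqNorm q fun j => decay δ j) * (v k * M)) := by
        gcongr
        · exact le_self_add
        · exact le_add_self
    _ = _ := by rw [tailSum]; ring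

theorem two_rpow_mul_tailSum_logK_le (hq : q ≠ 0) {s : ℝ} (hs : 0 < s)
    (hL : RegularlyVarying (fun x => 2 ^ L x) s)
    (hX : IsOfClass (fun f k => logK N₀ N₁ f k) (fun k => 2 ^ L k * v k) Nx) :
    ∃ C ≠ ∞, ∀ (f : X) (k : ℤ),
      2 ^ L k * tailSum q (fun j => v j * logK N₀ N₁ f j) k ≤ C * Nx f := by
  obtain ⟨C, hC, hgrowth⟩ := hL.exists_le_of_le (half_lt_self hs)
  obtain ⟨D, hD, hterm⟩ := hX.term_dominated
  have hsum := seqNorm_decay_ne_top hq (half_pos hs)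
  refine ⟨(seqNorm q fun j => decay (s / 2) j) * (C * D), by finiteness, fun f k => ?_⟩
  rw [← tailSum_const_mul hq, mul_assoc]
  refine tailSum_le_of_le_decay hq fun j hkj => ?_
  calc 2 ^ L k * (v j * logK N₀ N₁ f j)
      ≤ C * 2 ^ (s / 2 * (k - j)) * 2 ^ L j * (v j * logK N₀ N₁ f j) := by
        grw [hgrowth k j (mod_cast hkj)]
    _ = C * (2 ^ L j * v j * logK N₀ N₁ f j) * 2 ^ (s / 2 * (k - j : ℝ)) := by ring
    _ ≤ C * (D * Nx f) * 2 ^ (s / 2 * (k - j : ℝ)) := by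
        gcongr C * ?_ * _
        exact hterm (f, j)
    _ = C * D * Nx f * decay (s / 2) (j - k) := by
        rw [← mul_assoc C, decay, abs_of_nonneg (sub_nonneg.2 (mod_cast hkj)), ← mul_neg, neg_sub]

theorem two_rpow_mul_tailSum_logK_dominated (h₀ : IsQuasiNorm N₀) (h₁ : IsQuasiNorm N₁)
    (hq : q ≠ 0) {s : ℝ} (hs : 0 < s) (hL : RegularlyVarying (fun x => 2 ^ L x) s)
    (hX : IsOfClass (fun f k => logK N₀ N₁ f k) (fun k => 2 ^ L k * v k) Nx)
    (hY : Ny ≋ fun f => seqNorm q fun j => v j * logK N₀ N₁ f j) :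
    (fun p : X × ℤ => 2 ^ L p.2 * tailSum q (fun j => v j * logK N₀ N₁ p.1 j) p.2) ≲
      fun p => logK Nx Ny p.1 (L p.2) := by
  obtain ⟨A, hA, hadd⟩ := logK_add_dominated h₀ h₁
  obtain ⟨D, hD, hNx⟩ := two_rpow_mul_tailSum_logK_le hq hs hL hX
  obtain ⟨F, hF, hNy⟩ := hY.2
  have hA' : A * LpAddConst q ≠ ∞ := ENNReal.mul_ne_top hA (LpAddConst_lt_top q).ne
  refine ⟨A * LpAddConst q * (D + F), by finiteness, fun ⟨f, k⟩ => ?_⟩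
  dsimp only at hadd hNy ⊢
  rw [logK_eq_iInf (N₀ := Nx), ENNReal.mul_iInf (fun h => absurd h (by finiteness))]
  refine le_iInf fun g => ?_
  have hsplit (j : ℤ) :
      v j * logK N₀ N₁ f j ≤ A * (v j * logK N₀ N₁ g j + v j * logK N₀ N₁ (f - g) j) := by
    rw [← mul_add, mul_left_comm]
    gcongr
    simpa using hadd ((g, f - g), j)
  calc 2 ^ L k * tailSum q (fun j => v j * logK N₀ N₁ f j) k
      ≤ 2 ^ L k * (A * LpAddConst q * (tailSum q (fun j => v j * logK N₀ N₁ g j) k +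
          tailSum q (fun j => v j * logK N₀ N₁ (f - g) j) k)) := by
        gcongr
        exact tailSum_le_const_mul_add hA hsplit k
    _ ≤ A * LpAddConst q * (D * Nx g + F * (2 ^ L k * Ny (f - g))) := by
        grw [mul_left_comm, mul_add, tailSum_le_seqNorm fun j : ℤ => v j * logK N₀ N₁ (f - g) j,
          hNy, hNx, mul_left_comm _ F]
    _ ≤ A * LpAddConst q * ((D + F) * Nx g + (D + F) * (2 ^ L k * Ny (f - g))) := by
        gcongr
        · exact le_self_add
        · exact le_add_self
    _ = _ := by ring

-- Almost optimal splittings `f = g + (f - g)` for `K(2 ^ k, f)` in the couple `(N₀, N₁)` are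
-- almost optimal for `K(2 ^ L k, f)` in the couple `(Nx, Ny)`.
theorem logK_le_of_near (h₀ : IsQuasiNorm N₀) (h₁ : IsQuasiNorm N₁) (hq : q ≠ 0)
    (hθ₀ : 0 < θ₀) (hθ : θ₀ < θ₁) (hθ₁ : θ₁ < 1) (hv : RegularlyVarying v (-θ₁))
    (hv' : ∀ x, v x ≠ ∞) (hL : RegularlyVarying (fun x => 2 ^ L x) (θ₁ - θ₀))
    (hX : IsOfClass (fun f k => logK N₀ N₁ f k) (fun k => 2 ^ L k * v k) Nx)
    (hY : Ny ≋ fun f => seqNorm q fun j => v j * logK N₀ N₁ f j)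
    (hδ : 0 < δ) (hδ₀ : δ < θ₀) (hδ₀' : δ < 1 - θ₀) :
    ∃ C ≠ ∞, ∀ (f : X) (k : ℤ) (B : ℝ≥0∞),
      (∀ j : ℤ, j ≤ k → 2 ^ L j * tailSum q (fun i => v i * logK N₀ N₁ f i) j ≤
        B * decay δ (j - k)) →
        logK Nx Ny f (L k) ≤ C * B := by
  have hc : RegularlyVarying (fun x => 2 ^ L x * v x) (-θ₀) := by
    simpa [sub_add_eq_add_sub] using hL.mul hv
  obtain ⟨C, hC, hNx⟩ := hX.le_of_near h₀ h₁ hc hδ hδ₀ hδ₀'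
  obtain ⟨D, hD, hsub⟩ :=
    seqNorm_mul_logK_sub_le h₀ h₁ hq hv (hθ₀.trans hθ) hθ₁
  obtain ⟨F, hF, hNy⟩ := hY.1
  dsimp only at hNy
  refine ⟨2 * (C + F * D), by finiteness, fun f k B hB => ?_⟩
  have hcoeff (j : ℤ) (hjk : j ≤ k) : 2 ^ L j * v j * logK N₀ N₁ f j ≤ B * decay δ (j - k) := by
    grw [← hB j hjk, ← le_tailSum hq (fun i : ℤ => v i * logK N₀ N₁ f i) le_rfl, mul_assoc]
  have htail : 2 ^ L k * tailSum q (fun i => v i * logK N₀ N₁ f i) k ≤ B := by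
    simpa [decay_zero] using hB k le_rfl
  have hck : 2 ^ L k * v k ≠ ∞ := ENNReal.mul_ne_top (two_rpow_ne_top _) (hv' k)
  have hsplit (g : X) : logK Nx Ny f (L k) ≤
      (C + F * D) * (B + 2 ^ L k * v k * (N₀ g + 2 ^ (k : ℝ) * N₁ (f - g))) := by
    set M := N₀ g + 2 ^ (k : ℝ) * N₁ (f - g)
    calc logK Nx Ny f (L k) ≤ Nx g + 2 ^ L k * Ny (f - g) := logK_le f g _
      _ ≤ C * (B + 2 ^ L k * v k * M) + 2 ^ L k * (F * (D *
            (tailSum q (fun i => v i * logK N₀ N₁ f i) k + v k * M))) := by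
          gcongr
          · exact hNx f g k B hcoeff
          · grw [hNy, hsub f g k]
      _ = C * (B + 2 ^ L k * v k * M) +
            F * D * (2 ^ L k * tailSum q (fun i => v i * logK N₀ N₁ f i) k +
              2 ^ L k * v k * M) := by
          ring
      _ ≤ _ := by grw [htail, add_mul]
  calc logK Nx Ny f (L k)
      ≤ (C + F * D) * (B + 2 ^ L k * v k * logK N₀ N₁ f k) := by
        rw [logK_eq_iInf (N₀ := N₀), ENNReal.mul_iInf (fun h => absurd h hck), ENNReal.add_iInf,
          ENNReal.mul_iInf (fun h => absurd h (by finiteness))]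
        exact le_iInf hsplit
    _ ≤ (C + F * D) * (B + B) := by
        gcongr
        simpa [decay_zero] using hcoeff k le_rfl
    _ = _ := by ring

theorem seqNorm_mul_logK_comparable (h₀ : IsQuasiNorm N₀) (h₁ : IsQuasiNorm N₁) (hq : q ≠ 0)
    (hθ₀ : 0 < θ₀) (hθ : θ₀ < θ₁) (hθ₁ : θ₁ < 1) (hv : RegularlyVarying v (-θ₁))
    (hv' : ∀ x, v x ≠ ∞) (hL : RegularlyVarying (fun x => 2 ^ L x) (θ₁ - θ₀))
    (hX : IsOfClass (fun f k => logK N₀ N₁ f k) (fun k => 2 ^ L k * v k) Nx)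
    (hY : Ny ≋ fun f => seqNorm q fun j => v j * logK N₀ N₁ f j)
    {r : ℝ≥0∞} (hr : r ≠ 0) {w : ℝ → ℝ≥0∞} {θ : ℝ} (hθ' : 0 < θ) (hw : RegularlyVarying w (-θ)) :
    (fun f => seqNorm r fun k => w k * logK Nx Ny f k) ≋ fun f => seqNorm r fun k =>
      w (L k) * (2 ^ L k * tailSum q (fun j => v j * logK N₀ N₁ f j) k) := by
  have hs : 0 < θ₁ - θ₀ := sub_pos.2 hθ
  have hθs : 0 < θ * (θ₁ - θ₀) := mul_pos hθ' hs
  obtain ⟨δ, hδ, hδ'⟩ := exists_between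
    (lt_min hθ₀ (lt_min (sub_pos.2 (hθ.trans hθ₁)) (half_pos hθs)))
  rw [lt_min_iff, lt_min_iff] at hδ'
  obtain ⟨C, hC, hW⟩ := (hw.comp hL).exists_le_of_ge (δ := -(2 * δ)) (by linarith)
  refine ((hw.moderatelyVarying.mul moderatelyVarying_logK).seqNorm_comp hr hs hL).trans
    ⟨seqNorm_mul_dominated hr hδ (fun k j => j ≤ k) ⟨C, hC, fun k j hjk => ?_⟩ ?_, ?_⟩
  · rw [decay, abs_of_nonneg (sub_nonneg.2 (mod_cast hjk)), ← neg_mul]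
    exact hW k j (mod_cast hjk)
  · exact logK_le_of_near h₀ h₁ hq hθ₀ hθ hθ₁ hv hv' hL hX hY hδ hδ'.1 hδ'.2.1
  · exact ((two_rpow_mul_tailSum_logK_dominated h₀ h₁ hq hs hL hX hY).mul_left
      fun p => w (L p.2)).seqNorm_mono

end Holmstedt

/-- The weight `u ^ (-σ) * b u` in the variable `x = log₂ u`. -/
def logWeight (σ : ℝ) (b : ℝ → ℝ) (x : ℝ) : ℝ≥0∞ := ENNReal.ofReal ((2 ^ x) ^ (-σ) * b (2 ^ x))

theorem logWeight_eq_mul (σ : ℝ) (b : ℝ → ℝ) (x : ℝ) :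
    logWeight σ b x = 2 ^ (-σ * x) * ENNReal.ofReal (b (2 ^ x)) := by
  rw [logWeight, ENNReal.ofReal_mul (by positivity), ← Real.rpow_mul two_pos.le, ofReal_two_rpow,
    mul_comm x]

theorem logWeight_zero (b : ℝ → ℝ) : logWeight 0 b = fun x => ENNReal.ofReal (b (2 ^ x)) := by
  simp [funext (logWeight_eq_mul 0 b)]

theorem logWeight_mul_two_rpow (σ : ℝ) (b : ℝ → ℝ) (x : ℝ) :
    logWeight σ b x * 2 ^ x = logWeight (σ - 1) b x := by
  rw [logWeight_eq_mul, logWeight_eq_mul, mul_right_comm, ← two_rpow_add]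
  ring_nf

theorem RegularlyVarying.logWeight {b : ℝ → ℝ} {s : ℝ}
    (hb : RegularlyVarying (fun x => ENNReal.ofReal (b (2 ^ x))) s) (σ : ℝ) :
    RegularlyVarying (logWeight σ b) (-σ + s) := by
  simpa only [funext (logWeight_eq_mul σ b)] using (regularlyVarying_two_rpow (-σ)).mul hb

theorem SlowlyVarying.regularlyVarying_logWeight {b : ℝ → ℝ} (hb : SlowlyVarying b) (σ : ℝ) :
    RegularlyVarying (logWeight σ b) (-σ) := by
  simpa only [add_zero] using hb.regularlyVarying.logWeight σ

theorem LqNorm_image_two_rpow_weight {q : ℝ≥0∞} (hq : q ≠ 0) {s : Set ℝ} (hs : MeasurableSet s)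
    (σ : ℝ) (b : ℝ → ℝ) (g : ℝ → ℝ≥0∞) :
    LqNorm q ((fun x : ℝ => (2 : ℝ) ^ x) '' s)
        (fun u => ENNReal.ofReal (u ^ (-σ - q⁻¹.toReal) * b u) * g u) =
      substConst q * eLpNorm (fun x => logWeight σ b x * g (2 ^ x)) q (volume.restrict s) := by
  refine Eq.trans ?_
    (LqNorm_image_two_rpow hq hs fun u => ENNReal.ofReal (u ^ (-σ) * b u) * g u)
  rw [LqNorm_eq_eLpNorm hq, LqNorm_eq_eLpNorm hq]
  refine eLpNorm_congr_ae ((ae_restrict_iff' ?_).2 (.of_forall ?_))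
  · exact measurableEmbedding_two_rpow.measurableSet_image.2 hs
  · rintro _ ⟨x, -, rfl⟩
    dsimp only
    rw [← mul_assoc, ← ENNReal.ofReal_mul (by positivity), ← mul_assoc,
      ← Real.rpow_add (by positivity), neg_add_eq_sub, sub_eq_neg_add]

theorem LqNorm_Ioi_svWgt {r : ℝ≥0∞} (hr : r ≠ 0) (b : ℝ → ℝ) (x : ℝ) :
    LqNorm r (Ioi (2 ^ x)) (svWgt r b) = substConst r * tailNorm r (logWeight 0 b) x := by
  have h := LqNorm_image_two_rpow_weight hr (measurableSet_Ioi (a := x)) 0 b 1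
  simp only [image_two_rpow_Ioi, neg_zero, zero_sub, Pi.one_apply, mul_one] at h
  exact h

theorem LqNorm_Ioi_zero_comparable {ι : Type*} {q : ℝ≥0∞} (hq : q ≠ 0) {σ s : ℝ} {b : ℝ → ℝ}
    (hb : RegularlyVarying (logWeight σ b) s) {F : ι → ℝ → ℝ≥0∞}
    (hF : ModeratelyVarying fun i x => F i (2 ^ x)) :
    (fun i => LqNorm q (Ioi 0) fun u => ENNReal.ofReal (u ^ (-σ - q⁻¹.toReal) * b u) * F i u) ≋
      fun i => seqNorm q fun k => logWeight σ b k * F i (2 ^ (k : ℝ)) := by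
  simp only [← image_two_rpow_univ, LqNorm_image_two_rpow_weight hq MeasurableSet.univ,
    Measure.restrict_univ]
  exact (Comparable.const_mul (substConst_ne_zero q) (substConst_ne_top q)).trans
    ((hb.moderatelyVarying.mul hF).eLpNorm_volume q)

section Norms

variable {X : Type*} [AddCommGroup X] (N₀ N₁ : X → ℝ≥0∞) {σ s s' : ℝ} {q r : ℝ≥0∞} {a b : ℝ → ℝ}

theorem normK_comparable (hq : q ≠ 0) (hb : RegularlyVarying (logWeight σ b) s) :
    normK N₀ N₁ σ q b ≋ fun f => seqNorm q fun k => logWeight σ b k * logK N₀ N₁ f k :=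
  LqNorm_Ioi_zero_comparable hq hb moderatelyVarying_logK

theorem LqNorm_iterated_comparable (hq : q ≠ 0) (hr : r ≠ 0)
    (hβ : RegularlyVarying (logWeight 0 fun t => b t / a t) s) {S S' : ℝ → Set ℝ}
    (hS : ∀ x, (fun y : ℝ => (2 : ℝ) ^ y) '' S x = S' (2 ^ x)) (hSm : ∀ x, MeasurableSet (S x))
    (hmod : ModeratelyVarying fun (f : X) x =>
      eLpNorm (fun y => logWeight σ a y * logK N₀ N₁ f y) q (volume.restrict (S x)))
    {T : X → ℤ → ℝ≥0∞}
    (hT : (fun p : X × ℤ =>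
      eLpNorm (fun y => logWeight σ a y * logK N₀ N₁ p.1 y) q (volume.restrict (S p.2))) ≋
        fun p => T p.1 p.2) :
    (fun f => LqNorm r (Ioi 0) fun t => ENNReal.ofReal (t ^ (-r⁻¹.toReal) * (b t / a t)) *
      LqNorm q (S' t) fun u => ENNReal.ofReal (u ^ (-σ - q⁻¹.toReal) * a u) * Kf N₀ N₁ u f) ≋
      fun f => seqNorm r fun k => logWeight 0 (fun t => b t / a t) k * T f k := by
  have inner (f : X) (x : ℝ) : (LqNorm q (S' (2 ^ x)) fun u =>
      ENNReal.ofReal (u ^ (-σ - q⁻¹.toReal) * a u) * Kf N₀ N₁ u f) = substConst q *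
        eLpNorm (fun y => logWeight σ a y * logK N₀ N₁ f y) q (volume.restrict (S x)) := by
    rw [← hS, LqNorm_image_two_rpow_weight hq (hSm x)]
    rfl
  have outer := LqNorm_Ioi_zero_comparable hr hβ (F := fun (f : X) t => LqNorm q (S' t) fun u =>
      ENNReal.ofReal (u ^ (-σ - q⁻¹.toReal) * a u) * Kf N₀ N₁ u f) <| by
    simpa only [inner] using hmod.const_mul (substConst q)
  simp only [neg_zero, zero_sub, inner] at outer
  refine outer.trans (Comparable.seqNorm_congr (.mul_left _ ?_))
  exact (Comparable.const_mul (substConst_ne_zero q) (substConst_ne_top q)).trans hT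

theorem normL_comparable (hq : q ≠ 0) (hr : r ≠ 0)
    (hβ : RegularlyVarying (logWeight 0 fun t => b t / a t) s)
    (ha : RegularlyVarying (logWeight σ a) s') :
    normL N₀ N₁ σ r q b a ≋ fun f => seqNorm r fun k => logWeight 0 (fun t => b t / a t) k *
      headSum q (fun j => logWeight σ a j * logK N₀ N₁ f j) k := by
  have hg : ModeratelyVarying fun (f : X) x => logWeight σ a x * logK N₀ N₁ f x :=
    ha.moderatelyVarying.mul moderatelyVarying_logK
  exact LqNorm_iterated_comparable N₀ N₁ hq hr hβ (S' := Ioo 0) image_two_rpow_Iio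
    (fun _ => measurableSet_Iio) (hg.head q) (hg.headNorm_sampling q)

theorem normR_comparable (hq : q ≠ 0) (hr : r ≠ 0)
    (hβ : RegularlyVarying (logWeight 0 fun t => b t / a t) s)
    (ha : RegularlyVarying (logWeight σ a) s') :
    normR N₀ N₁ σ r q b a ≋ fun f => seqNorm r fun k => logWeight 0 (fun t => b t / a t) k *
      tailSum q (fun j => logWeight σ a j * logK N₀ N₁ f j) k := by
  have hg : ModeratelyVarying fun (f : X) x => logWeight σ a x * logK N₀ N₁ f x :=
    ha.moderatelyVarying.mul moderatelyVarying_logK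
  exact LqNorm_iterated_comparable N₀ N₁ hq hr hβ image_two_rpow_Ioi
    (fun _ => measurableSet_Ioi) (hg.tail q) (hg.tailNorm_sampling q)

end Norms

theorem RegularlyVarying.ofReal_div {f g : ℝ → ℝ} {s s' : ℝ}
    (hf : RegularlyVarying (fun x => ENNReal.ofReal (f x)) s)
    (hg : RegularlyVarying (fun x => ENNReal.ofReal (g x)) s') (hg₀ : ∀ x, 0 < g x) :
    RegularlyVarying (fun x => ENNReal.ofReal (f x / g x)) (s + -s') := by
  simpa only [ENNReal.ofReal_div_of_pos (hg₀ _), ← div_eq_mul_inv] using hf.mul hg.inv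

theorem RegularlyVarying.const_mul {w : ℝ → ℝ≥0∞} {s : ℝ} (hw : RegularlyVarying w s) (c : ℝ≥0∞) :
    RegularlyVarying (fun x => c * w x) s := by
  intro ε hε
  obtain ⟨C, hC, h⟩ := hw ε hε
  refine ⟨C, hC, fun x y => ?_⟩
  beta_reduce
  grw [h x y, mul_left_comm]

theorem RegularlyVarying.ne_top {w : ℝ → ℝ≥0∞} {s x : ℝ} (hw : RegularlyVarying w s)
    (hx : w x ≠ ∞) (y : ℝ) : w y ≠ ∞ :=
  let ⟨_, hC, h⟩ := hw 1 one_pos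
  ne_top_of_le_ne_top (ENNReal.mul_ne_top (ENNReal.mul_ne_top hC (two_rpow_ne_top _)) hx) (h y x)

theorem RegularlyVarying.ne_zero {w : ℝ → ℝ≥0∞} {s x : ℝ} (hw : RegularlyVarying w s)
    (hx : w x ≠ 0) (y : ℝ) : w y ≠ 0 := fun hy =>
  let ⟨_, _, h⟩ := hw 1 one_pos
  hx (le_zero_iff.1 ((h x y).trans_eq (by rw [hy, mul_zero])))

theorem RegularlyVarying.tailNorm_ne_zero {q : ℝ≥0∞} (hq : q ≠ 0) {w : ℝ → ℝ≥0∞} {s : ℝ}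
    (hw : RegularlyVarying w s) (hw₀ : w 0 ≠ 0) (x : ℝ) : tailNorm q w x ≠ 0 := by
  refine (hw.tail q).ne_zero (x := 0) (fun h => hw₀ ?_) x
  obtain ⟨C, -, hC⟩ := (hw.moderatelyVarying.tailNorm_sampling (ι := Unit) q).2
  refine le_zero_iff.1 ?_
  calc w 0 = (Ici (0 : ℤ)).indicator (fun k => w k) 0 := by simp
    _ ≤ tailSum q (fun k => w k) 0 := le_seqNorm hq _ _
    _ ≤ C * tailNorm q w (0 : ℤ) := hC ((), 0)
    _ = 0 := by rw [Int.cast_zero, h, mul_zero]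

/-- The function `c₀(t) = a(t) ‖s ^ (-1/r) b(s) / a(s)‖_{r,(t,∞)}`, up to which `t ^ (-θ₀)` is the
size of the class of the space `Ā^𝓛_{θ₀,r,b,q,a}`. -/
def tailWeight (r : ℝ≥0∞) (b a : ℝ → ℝ) (t : ℝ) : ℝ :=
  a t * (LqNorm r (Ioi t) (svWgt r fun s => b s / a s)).toReal

section TailWeight

variable {r : ℝ≥0∞} {a b : ℝ → ℝ}

theorem SlowlyVarying.apply_two_rpow_pos (hb : SlowlyVarying b) (x : ℝ) : 0 < b (2 ^ x) :=
  hb.2.1 _ (Real.rpow_pos_of_pos two_pos x)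

theorem SlowlyVarying.regularlyVarying_div (hb : SlowlyVarying b) (ha : SlowlyVarying a) :
    RegularlyVarying (logWeight 0 fun t => b t / a t) 0 := by
  rw [logWeight_zero]
  simpa only [neg_zero, add_zero] using
    hb.regularlyVarying.ofReal_div ha.regularlyVarying ha.apply_two_rpow_pos

theorem tailNorm_logWeight_div_ne_top (hr : r ≠ 0) (hb : SlowlyVarying b) (ha : SlowlyVarying a)
    (hfin : LqNorm r (Ioi 1) (svWgt r fun s => b s / a s) ≠ ∞) (x : ℝ) :
    tailNorm r (logWeight 0 fun t => b t / a t) x ≠ ∞ := by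
  refine ((hb.regularlyVarying_div ha).tail r).ne_top (x := 0) (fun h => hfin ?_) x
  rw [← Real.rpow_zero 2, LqNorm_Ioi_svWgt hr, h, ENNReal.mul_top (substConst_ne_zero r)]

theorem tailNorm_logWeight_div_ne_zero (hr : r ≠ 0) (hb : SlowlyVarying b) (ha : SlowlyVarying a)
    (x : ℝ) : tailNorm r (logWeight 0 fun t => b t / a t) x ≠ 0 := by
  refine (hb.regularlyVarying_div ha).tailNorm_ne_zero hr ?_ x
  have := div_pos (hb.apply_two_rpow_pos 0) (ha.apply_two_rpow_pos 0)
  simpa [logWeight] using this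

theorem tailWeight_pos (hr : r ≠ 0) (hb : SlowlyVarying b) (ha : SlowlyVarying a)
    (hfin : LqNorm r (Ioi 1) (svWgt r fun s => b s / a s) ≠ ∞) (x : ℝ) :
    0 < tailWeight r b a (2 ^ x) := by
  refine mul_pos (ha.apply_two_rpow_pos x) ?_
  rw [LqNorm_Ioi_svWgt hr]
  exact ENNReal.toReal_pos
    (mul_ne_zero (substConst_ne_zero r) (tailNorm_logWeight_div_ne_zero hr hb ha x))
    (ENNReal.mul_ne_top (substConst_ne_top r) (tailNorm_logWeight_div_ne_top hr hb ha hfin x))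

theorem logWeight_tailWeight (hr : r ≠ 0) (hb : SlowlyVarying b) (ha : SlowlyVarying a)
    (hfin : LqNorm r (Ioi 1) (svWgt r fun s => b s / a s) ≠ ∞) (σ x : ℝ) :
    logWeight σ (tailWeight r b a) x =
      substConst r * (logWeight σ a x * tailNorm r (logWeight 0 fun t => b t / a t) x) := by
  rw [logWeight_eq_mul, logWeight_eq_mul, tailWeight,
    ENNReal.ofReal_mul (ha.apply_two_rpow_pos x).le, LqNorm_Ioi_svWgt hr,
    ENNReal.ofReal_toReal (ENNReal.mul_ne_top (substConst_ne_top r)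
      (tailNorm_logWeight_div_ne_top hr hb ha hfin x))]
  ring

theorem regularlyVarying_tailWeight (hr : r ≠ 0) (hb : SlowlyVarying b) (ha : SlowlyVarying a)
    (hfin : LqNorm r (Ioi 1) (svWgt r fun s => b s / a s) ≠ ∞) :
    RegularlyVarying (fun x => ENNReal.ofReal (tailWeight r b a (2 ^ x))) 0 := by
  rw [← logWeight_zero, funext (logWeight_tailWeight hr hb ha hfin 0)]
  simpa using
    ((ha.regularlyVarying_logWeight 0).mul ((hb.regularlyVarying_div ha).tail r)).const_mul _

theorem isOfClass_normL {X : Type*} [AddCommGroup X] (N₀ N₁ : X → ℝ≥0∞) {q : ℝ≥0∞} (σ : ℝ)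
    (hq : q ≠ 0) (hr : r ≠ 0) (hb : SlowlyVarying b) (ha : SlowlyVarying a)
    (hfin : LqNorm r (Ioi 1) (svWgt r fun s => b s / a s) ≠ ∞) :
    IsOfClass (fun f k => logK N₀ N₁ f k) (fun k => logWeight σ (tailWeight r b a) k)
      (normL N₀ N₁ σ r q b a) := by
  refine (isOfClass_seqNorm_mul_headSum hq hr (hb.regularlyVarying_div ha)
    (tailNorm_logWeight_div_ne_zero hr hb ha) (tailNorm_logWeight_div_ne_top hr hb ha hfin)
    _ _).congr ?_ (normL_comparable N₀ N₁ hq hr (hb.regularlyVarying_div ha)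
      (ha.regularlyVarying_logWeight σ)).symm
  simp only [logWeight_tailWeight hr hb ha hfin]
  exact (Comparable.const_mul (substConst_ne_zero r) (substConst_ne_top r)).symm

end TailWeight

/-- The change of variable `t ↦ ρ t` in the variable `x = log₂ t`. -/
def logScale (ρ : ℝ → ℝ) (x : ℝ) : ℝ := Real.logb 2 (ρ (2 ^ x))

section Scale

variable {θ₀ θ₁ : ℝ} {b c ρ : ℝ → ℝ}

theorem two_rpow_logScale {x : ℝ} (hρ : 0 < ρ (2 ^ x)) : (2 : ℝ) ^ logScale ρ x = ρ (2 ^ x) :=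
  Real.rpow_logb two_pos (by norm_num) hρ

theorem two_rpow_logScale_eq_logWeight (hb : ∀ x : ℝ, 0 < b (2 ^ x)) (hc : ∀ x : ℝ, 0 < c (2 ^ x))
    (hρ : ∀ t, ρ t = t ^ (θ₁ - θ₀) * (c t / b t)) (x : ℝ) :
    (2 : ℝ≥0∞) ^ logScale ρ x = logWeight (-(θ₁ - θ₀)) (fun t => c t / b t) x := by
  have := hb x
  have := hc x
  rw [← ofReal_two_rpow, two_rpow_logScale (by rw [hρ]; positivity), hρ, logWeight, neg_neg]

theorem regularlyVarying_two_rpow_logScale (hb : SlowlyVarying b) (hc : ∀ x : ℝ, 0 < c (2 ^ x))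
    (hcv : RegularlyVarying (fun x => ENNReal.ofReal (c (2 ^ x))) 0)
    (hρ : ∀ t, ρ t = t ^ (θ₁ - θ₀) * (c t / b t)) :
    RegularlyVarying (fun x => 2 ^ logScale ρ x) (θ₁ - θ₀) := by
  simp only [two_rpow_logScale_eq_logWeight hb.apply_two_rpow_pos hc hρ]
  have h := hcv.ofReal_div hb.regularlyVarying hb.apply_two_rpow_pos
  simpa using h.logWeight (b := fun t => c t / b t) (-(θ₁ - θ₀))

theorem two_rpow_logScale_mul_logWeight (hb : ∀ x : ℝ, 0 < b (2 ^ x)) (hc : ∀ x : ℝ, 0 < c (2 ^ x))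
    (hρ : ∀ t, ρ t = t ^ (θ₁ - θ₀) * (c t / b t)) (x : ℝ) :
    2 ^ logScale ρ x * logWeight θ₁ b x = logWeight θ₀ c x := by
  have := hb x
  have := hc x
  rw [two_rpow_logScale_eq_logWeight hb hc hρ, logWeight, logWeight, logWeight,
    ← ENNReal.ofReal_mul (by positivity)]
  congr 1
  have hpow : ((2 : ℝ) ^ x) ^ (-θ₀) = (2 ^ x) ^ (-(-(θ₁ - θ₀))) * (2 ^ x) ^ (-θ₁) := by
    rw [← Real.rpow_add (by positivity)]
    ring_nf
  rw [hpow]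
  field_simp

theorem logWeight_logScale_mul_logWeight (hb : ∀ x : ℝ, 0 < b (2 ^ x)) (hc : ∀ x : ℝ, 0 < c (2 ^ x))
    (hρ : ∀ t, ρ t = t ^ (θ₁ - θ₀) * (c t / b t)) (a : ℝ → ℝ) (θ x : ℝ) :
    logWeight (θ - 1) a (logScale ρ x) * logWeight θ₁ b x =
      logWeight ((1 - θ) * θ₀ + θ * θ₁) (fun t => c t ^ (1 - θ) * b t ^ θ * a (ρ t)) x := by
  have hb := hb x
  have hc := hc x
  have hρ₀ : 0 < ρ (2 ^ x) := by rw [hρ]; positivity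
  rw [logWeight, two_rpow_logScale hρ₀, neg_sub, logWeight, logWeight,
    ← ENNReal.ofReal_mul' (by positivity)]
  congr 1
  set t : ℝ := 2 ^ x
  have ht : 0 < t := by positivity
  have hscale : ρ t ^ (1 - θ) = t ^ ((θ₁ - θ₀) * (1 - θ)) * (c t ^ (1 - θ) / b t ^ (1 - θ)) := by
    rw [hρ, Real.mul_rpow (by positivity) (by positivity), ← Real.rpow_mul ht.le,
      Real.div_rpow hc.le hb.le]
  have hsplit : b t = b t ^ (1 - θ) * b t ^ θ := by
    rw [← Real.rpow_add hb, sub_add_cancel, Real.rpow_one]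
  have hpow : t ^ (-((1 - θ) * θ₀ + θ * θ₁)) = t ^ ((θ₁ - θ₀) * (1 - θ)) * t ^ (-θ₁) := by
    rw [← Real.rpow_add ht]
    ring_nf
  calc ρ t ^ (1 - θ) * a (ρ t) * (t ^ (-θ₁) * b t)
      = t ^ ((θ₁ - θ₀) * (1 - θ)) * (c t ^ (1 - θ) / b t ^ (1 - θ)) * a (ρ t) *
          (t ^ (-θ₁) * (b t ^ (1 - θ) * b t ^ θ)) := by rw [hscale, ← hsplit]
    _ = t ^ (-((1 - θ) * θ₀ + θ * θ₁)) * (c t ^ (1 - θ) * b t ^ θ * a (ρ t)) := by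
      rw [hpow]
      field_simp

theorem logWeight_zero_logScale (hb : ∀ x : ℝ, 0 < b (2 ^ x)) (hc : ∀ x : ℝ, 0 < c (2 ^ x))
    (hρ : ∀ t, ρ t = t ^ (θ₁ - θ₀) * (c t / b t)) (a : ℝ → ℝ) (x : ℝ) :
    logWeight 0 a (logScale ρ x) = logWeight 0 (fun t => b t * a (ρ t) / b t) x := by
  have hρ₀ : 0 < ρ (2 ^ x) := by
    have := hb x
    have := hc x
    rw [hρ]
    positivity
  rw [logWeight_zero, logWeight_zero]
  beta_reduce
  rw [two_rpow_logScale hρ₀, mul_div_cancel_left₀ _ (hb x).ne']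

end Scale

section Reiteration

variable {X : Type*} [AddCommGroup X] {N₀ N₁ : X → ℝ≥0∞} {θ₀ θ₁ θ : ℝ} {q₀ r₀ r₁ r : ℝ≥0∞}
  {a a₀ b₀ b₁ ρ : ℝ → ℝ}

theorem normK_normL_normK_comparable (h₀ : IsQuasiNorm N₀) (h₁ : IsQuasiNorm N₁)
    (hθ₀ : 0 < θ₀) (hθ₀₁ : θ₀ < θ₁) (hθ₁ : θ₁ < 1) (hq₀ : q₀ ≠ 0) (hr₀ : r₀ ≠ 0) (hr₁ : r₁ ≠ 0)
    (hr : r ≠ 0) (ha : SlowlyVarying a) (ha₀ : SlowlyVarying a₀) (hb₀ : SlowlyVarying b₀)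
    (hb₁ : SlowlyVarying b₁) (hfin : LqNorm r₀ (Ioi 1) (svWgt r₀ fun s => b₀ s / a₀ s) ≠ ∞)
    (hρ : ∀ t, ρ t = t ^ (θ₁ - θ₀) * (tailWeight r₀ b₀ a₀ t / b₁ t)) (hθ : 0 < θ) :
    normK (normL N₀ N₁ θ₀ r₀ q₀ b₀ a₀) (normK N₀ N₁ θ₁ r₁ b₁) θ r a ≋ fun f => seqNorm r fun k =>
      logWeight (θ - 1) a (logScale ρ k) *
        tailSum r₁ (fun j => logWeight θ₁ b₁ j * logK N₀ N₁ f j) k := by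
  have hc := tailWeight_pos hr₀ hb₀ ha₀ hfin
  have hL := regularlyVarying_two_rpow_logScale hb₁ hc
    (regularlyVarying_tailWeight hr₀ hb₀ ha₀ hfin) hρ
  have hX := isOfClass_normL N₀ N₁ θ₀ hq₀ hr₀ hb₀ ha₀ hfin
  simp only [← two_rpow_logScale_mul_logWeight hb₁.apply_two_rpow_pos hc hρ] at hX
  have h := (normK_comparable _ _ hr (ha.regularlyVarying_logWeight θ)).trans <|
    seqNorm_mul_logK_comparable h₀ h₁ hr₁ hθ₀ hθ₀₁ hθ₁ (hb₁.regularlyVarying_logWeight θ₁)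
      (fun _ => ofReal_ne_top) hL hX
      (normK_comparable N₀ N₁ hr₁ (hb₁.regularlyVarying_logWeight θ₁)) hr hθ
      (ha.regularlyVarying_logWeight θ)
  simpa only [← mul_assoc, logWeight_mul_two_rpow] using h

theorem theorem11_general (h₀ : IsQuasiNorm N₀) (h₁ : IsQuasiNorm N₁)
    (hθ₀ : 0 < θ₀) (hθ₀₁ : θ₀ < θ₁) (hθ₁ : θ₁ < 1)
    (hq₀ : 0 < q₀) (hr₀ : 0 < r₀) (hr₁ : 0 < r₁) (hr : 0 < r)
    (ha : SlowlyVarying a) (ha₀ : SlowlyVarying a₀) (hb₀ : SlowlyVarying b₀)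
    (hb₁ : SlowlyVarying b₁) (hfin : LqNorm r₀ (Ioi 1) (svWgt r₀ fun s => b₀ s / a₀ s) ≠ ∞)
    {c₀ : ℝ → ℝ}
    (hc₀ : ∀ t, c₀ t = a₀ t * (LqNorm r₀ (Ioi t) (svWgt r₀ fun s => b₀ s / a₀ s)).toReal)
    (hρ : ∀ t, ρ t = t ^ (θ₁ - θ₀) * (c₀ t / b₁ t)) :
    (∀ θ : ℝ, 0 < θ → θ < 1 →
      EquivNorms
        (normK (normL N₀ N₁ θ₀ r₀ q₀ b₀ a₀) (normK N₀ N₁ θ₁ r₁ b₁) θ r a)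
        (normK N₀ N₁ ((1 - θ) * θ₀ + θ * θ₁) r fun t => c₀ t ^ (1 - θ) * b₁ t ^ θ * a (ρ t))) ∧
      EquivNorms
        (normK (normL N₀ N₁ θ₀ r₀ q₀ b₀ a₀) (normK N₀ N₁ θ₁ r₁ b₁) 1 r a)
        (normR N₀ N₁ θ₁ r r₁ (fun t => b₁ t * a (ρ t)) b₁) := by
  obtain rfl : c₀ = tailWeight r₀ b₀ a₀ := funext hc₀
  have hc := tailWeight_pos hr₀.ne' hb₀ ha₀ hfin
  have hL := regularlyVarying_two_rpow_logScale hb₁ hc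
    (regularlyVarying_tailWeight hr₀.ne' hb₀ ha₀ hfin) hρ
  have holmstedt {θ : ℝ} (hθ : 0 < θ) := normK_normL_normK_comparable h₀ h₁ hθ₀ hθ₀₁ hθ₁ hq₀.ne'
    hr₀.ne' hr₁.ne' hr.ne' ha ha₀ hb₀ hb₁ hfin hρ hθ
  have hv := hb₁.regularlyVarying_logWeight θ₁
  refine ⟨fun θ hθ hθ' => ((holmstedt hθ).trans ?_).equivNorms,
    ((holmstedt one_pos).trans ?_).equivNorms⟩
  · have hW := (ha.regularlyVarying_logWeight (θ - 1)).comp hL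
    have weight := logWeight_logScale_mul_logWeight hb₁.apply_two_rpow_pos hc hρ a θ
    have hη := hW.mul hv
    simp only [weight] at hη
    refine (seqNorm_mul_tailSum hr₁.ne' hr.ne' (by nlinarith) hW _).trans ?_
    simpa only [← mul_assoc, weight] using (normK_comparable N₀ N₁ hr.ne' hη).symm
  · have hW := (ha.regularlyVarying_logWeight 0).comp hL
    have weight := logWeight_zero_logScale hb₁.apply_two_rpow_pos hc hρ a
    simp only [weight] at hW
    simpa only [sub_self, weight] using (normR_comparable N₀ N₁ hr₁.ne' hr.ne' hW hv).symm

end Reiteration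

theorem theorem11
    (A₀ A₁ : QuasiBanach E)
    (hne : ∃ x : E, x ≠ 0 ∧ A₀.N x ≠ ∞ ∧ A₁.N x ≠ ∞)
    (θ₀ θ₁ : ℝ) (hθ₀ : 0 < θ₀) (hθ₀₁ : θ₀ < θ₁) (hθ₁ : θ₁ < 1)
    (q₀ r₀ r₁ r : ℝ≥0∞) (hq₀ : 0 < q₀) (hr₀ : 0 < r₀) (hr₁ : 0 < r₁) (hr : 0 < r)
    (a a₀ b₀ b₁ : ℝ → ℝ)
    (h_sv_a : SlowlyVarying a)
    (h_sv_a₀ : SlowlyVarying a₀)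
    (h_sv_b₀ : SlowlyVarying b₀)
    (h_sv_b₁ : SlowlyVarying b₁)
    (hfin : LqNorm r₀ (Ioi 1) (svWgt r₀ (fun s => b₀ s / a₀ s)) ≠ ∞)
    (c₀ ρ : ℝ → ℝ)
    (hc₀ : ∀ t, c₀ t = a₀ t * (LqNorm r₀ (Ioi t) (svWgt r₀ (fun s => b₀ s / a₀ s))).toReal)
    (hρ : ∀ t, ρ t = t ^ (θ₁ - θ₀) * (c₀ t / b₁ t)) :
    (∀ θ : ℝ, 0 < θ → θ < 1 →
      EquivNorms
        (normK (normL A₀.N A₁.N θ₀ r₀ q₀ b₀ a₀) (normK A₀.N A₁.N θ₁ r₁ b₁) θ r a)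
        (normK A₀.N A₁.N ((1 - θ) * θ₀ + θ * θ₁) r
          (fun t => c₀ t ^ (1 - θ) * b₁ t ^ θ * a (ρ t)))) ∧
    (LqNorm r (Ioo 0 1) (svWgt r (fun s => a s)) ≠ ∞ →
      EquivNorms
        (normK (normL A₀.N A₁.N θ₀ r₀ q₀ b₀ a₀) (normK A₀.N A₁.N θ₁ r₁ b₁) 1 r a)
        (normR A₀.N A₁.N θ₁ r r₁ (fun t => b₁ t * a (ρ t)) b₁)) := by
  obtain ⟨h, h'⟩ := theorem11_general A₀.isQuasiNorm A₁.isQuasiNorm hθ₀ hθ₀₁ hθ₁ hq₀ hr₀ hr₁ hr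
    h_sv_a h_sv_a₀ h_sv_b₀ h_sv_b₁ hfin hc₀ hρ
  exact ⟨h, fun _ => h'⟩

end
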